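/- arXiv:2506.22667 — 2 statements merged into one kernel-verified Lean document; each statement's English description precedes it below -/
import Mathlib

section
/- There is an absolute constant C such that for all X ≥ 3 one has ∑_{1 < m ≤ X} μ²(2m)/τ(m) · L(1, (·/m)) ≤ C · X/√(log X), where for an odd squarefree integer m > 1, L(1, (·/m)) := ∑_{n=1}^∞ (n/m)/n (this series converges, since (·/m) is a nontrivial real Dirichlet character). -/
open Finset

/-!
The sum is treated by an upper-bound sieve of dimension `1/2`, whose role is to replace `1 / τ(m)`
by a majorant that is a short divisor sum.

Let `ρ_d` be Selberg-type weights supported on squarefree `d ≤ D` with `ρ_1 = 1`, and put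
`Q(m) = ∑_{c ∣ m} (∑_{d ≤ D, c ∣ d ∣ m} ρ_d)²`. Pairing the inner sums with `μ(c)` gives `ρ_1 = 1`,
so Cauchy–Schwarz over the `τ(m)` divisors yields `Q(m) ≥ 1 / τ(m)`
(`one_div_card_divisors_le_sieveMajorant`). With the optimal weights, `∑_{m ≤ Y} Q(m) ≤ Y / V + D⁵`
(`sum_selbergMajorant_le`), where `V = ∑_{f ≤ D} μ²(f) / ∏_{p ∣ f} (2 p - 1)` satisfies
`2 V² ≥ log (D + 1)` (`log_add_one_le_two_mul_selbergSum_sq`).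

The majorant may be inserted because `L(1, (·/m)) ≥ 0`. In quantitative form, Euler's product for
`s > 1` and the limit `s → 1` show that the truncation `∑_{n ≤ N} (n/m)/n` plus its tail bound is
nonnegative (`truncatedL_add_tailBound_nonneg`); the tail is bounded through the Pólya–Vinogradov
inequality (`norm_sum_range_le_of_isPrimitive`). By positivity the sum extends to all odd `m ≤ X`,
squarefree or not.

Exchanging the summations over `m` and `n ≤ N`, each square `n` contributes at most
`(1 / n) ∑_{m ≤ X} Q(m)`, and `∑ 1 / n` over squares is at most `2`. For nonsquare `n`, the
function `k ↦ (n/k)` on odd `k` is `4 n`-periodic with mean zero by reciprocity, so the sum of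
`Q(m) (n/m)` over odd `m` is at most `4 n D⁵` (`sum_selbergMajorant_mul_oddJacobi_le`). Taking
`D ≈ X^(1/40)` and `N ≈ X^(3/4)` makes everything but the main term `X / V ≪ X / √(log X)`
negligible.
-/

/-! ### Finite sums -/

theorem sum_zmod_val {M : Type*} [AddCommMonoid M] (n : ℕ) [NeZero n] (f : ℕ → M) :
    ∑ x : ZMod n, f x.val = ∑ i ∈ range n, f i := by
  cases n with
  | zero => exact absurd rfl (NeZero.ne 0)
  | succ n => exact Fin.sum_univ_eq_sum_range f (n + 1)

theorem sum_range_dvd {M : Type*} [AddCommMonoid M] {p : ℕ} (hp : 0 < p) (x : ℕ) (g : ℕ → M) :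
    ∑ n ∈ range x with p ∣ n, g n = ∑ k ∈ range (x ⌈/⌉ p), g (p * k) := by
  have lt_iff (k : ℕ) : k < x ⌈/⌉ p ↔ p * k < x := by
    rw [← not_le, ← not_le, ceilDiv_le_iff_le_mul hp]
  symm
  refine sum_nbij (p * ·) (fun k hk => ?_) (mul_right_injective₀ hp.ne').injOn ?_ fun _ _ => rfl
  · simpa using (lt_iff k).mp (mem_range.mp hk)
  · intro n hn
    obtain ⟨hn, k, rfl⟩ := mem_filter.mp hn
    exact ⟨k, by simpa using (lt_iff k).mpr (mem_range.mp hn), rfl⟩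

theorem norm_sum_range_le_of_periodic {E : Type*} [SeminormedAddCommGroup E] {g : ℕ → E} {M : ℕ}
    (hM : 0 < M) (hper : Function.Periodic g M) {C : ℝ} (hg : ∀ k, ‖g k‖ ≤ C)
    (hzero : ∑ k ∈ range M, g k = 0) (K : ℕ) : ‖∑ k ∈ range K, g k‖ ≤ M * C := by
  induction K using Nat.strong_induction_on with
  | _ K ih =>
    rcases le_or_gt M K with hMK | hKM
    · obtain ⟨r, rfl⟩ := Nat.exists_eq_add_of_le hMK
      have hshift (k : ℕ) : g (M + k) = g k := by rw [add_comm, hper]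
      simpa only [sum_range_add, hzero, zero_add, hshift] using ih r (by lia)
    · have hC : 0 ≤ C := (norm_nonneg _).trans (hg 0)
      calc ‖∑ k ∈ range K, g k‖ ≤ ∑ _k ∈ range K, C := norm_sum_le_of_le _ fun k _ => hg k
        _ = K * C := by simp
        _ ≤ M * C := by gcongr

/-- Multiplication by `k₀` permutes the residues modulo `M` and scales the sum by `g k₀ ≠ 1`. -/
theorem sum_range_eq_zero_of_periodic_of_map_mul {R : Type*} [CommRing R] [IsDomain R] {g : ℕ → R}
    {M : ℕ} [NeZero M] (hper : Function.Periodic g M) (hmul : ∀ a b, g (a * b) = g a * g b) {k₀ : ℕ}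
    (hcop : k₀.Coprime M) (hk₀ : g k₀ ≠ 1) : ∑ k ∈ range M, g k = 0 := by
  rw [← sum_zmod_val]
  have hscale : g k₀ * ∑ x : ZMod M, g x.val = ∑ x : ZMod M, g x.val := by
    rw [mul_sum]
    conv_rhs => rw [← Equiv.sum_comp (Units.mulLeft (ZMod.unitOfCoprime k₀ hcop))]
    refine sum_congr rfl fun x _ => ?_
    rw [Units.mulLeft_apply, ZMod.coe_unitOfCoprime, ZMod.val_mul, hper.map_mod_nat, hmul,
      ZMod.val_natCast, hper.map_mod_nat]
  exact (mul_left_eq_self₀.mp hscale).resolve_left hk₀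

/-- **Abel's inequality**. -/
theorem norm_sum_range_smul_le {E : Type*} [SeminormedAddCommGroup E] [NormedSpace ℝ E] {f : ℕ → ℝ}
    {z : ℕ → E} {B : ℝ} (hf : Antitone f) (hf0 : ∀ n, 0 ≤ f n)
    (hz : ∀ x, ‖∑ i ∈ range x, z i‖ ≤ B) (n : ℕ) : ‖∑ i ∈ range n, f i • z i‖ ≤ f 0 * B := by
  rw [sum_range_by_parts]
  have hboundary : ‖f (n - 1) • ∑ i ∈ range n, z i‖ ≤ f (n - 1) * B := by
    rw [norm_smul, Real.norm_of_nonneg (hf0 _)]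
    exact mul_le_mul_of_nonneg_left (hz n) (hf0 _)
  have hvariation : ‖∑ i ∈ range (n - 1), (f (i + 1) - f i) • ∑ j ∈ range (i + 1), z j‖
      ≤ (f 0 - f (n - 1)) * B := by
    rw [← sum_range_sub', sum_mul]
    refine norm_sum_le_of_le _ fun i _ => ?_
    have hstep : 0 ≤ f i - f (i + 1) := sub_nonneg.mpr (hf i.le_succ)
    rw [norm_smul, Real.norm_eq_abs, abs_sub_comm, abs_of_nonneg hstep]
    exact mul_le_mul_of_nonneg_left (hz _) hstep
  linarith [norm_sub_le (f (n - 1) • ∑ i ∈ range n, z i)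
    (∑ i ∈ range (n - 1), (f (i + 1) - f i) • ∑ j ∈ range (i + 1), z j)]

theorem norm_sum_Ico_smul_le {E : Type*} [SeminormedAddCommGroup E] [NormedSpace ℝ E] {f : ℕ → ℝ}
    {z : ℕ → E} {B : ℝ} {M : ℕ} (hf : AntitoneOn f (Set.Ici M)) (hf0 : ∀ n, M ≤ n → 0 ≤ f n)
    (hz : ∀ x, ‖∑ i ∈ range x, z i‖ ≤ B) (K : ℕ) :
    ‖∑ i ∈ Ico M K, f i • z i‖ ≤ f M * (2 * B) := by
  rw [sum_Ico_eq_sum_range]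
  refine norm_sum_range_smul_le (f := fun i => f (M + i)) (fun i j hij => ?_)
    (fun i => hf0 _ (Nat.le_add_right M i)) (fun x => ?_) _
  · exact hf (Nat.le_add_right M i) (Nat.le_add_right M j) (by lia)
  · rw [← add_sub_cancel_left (∑ i ∈ range M, z i) (∑ i ∈ range x, z (M + i)), ← sum_range_add]
    linarith [norm_sub_le (∑ i ∈ range (M + x), z i) (∑ i ∈ range M, z i), hz (M + x), hz M]

theorem sum_one_div_sq_le (N : ℕ) : ∑ l ∈ Icc 1 N, 1 / (l : ℝ) ^ 2 ≤ 2 := by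
  have h := sum_Ioo_inv_sq_le (α := ℝ) 0 (N + 1)
  simpa [one_div, ← Ico_add_one_left_eq_Ioo, Ico_add_one_right_eq_Icc] using h

theorem sum_one_div_isSquare_le (N : ℕ) : ∑ n ∈ Icc 1 N with IsSquare n, 1 / (n : ℝ) ≤ 2 := by
  have hsub : {n ∈ Icc 1 N | IsSquare n} ⊆ (Icc 1 N).image (· ^ 2) := by
    intro n hn
    obtain ⟨hn, l, rfl⟩ := mem_filter.mp hn
    have := mem_Icc.mp hn
    exact mem_image.mpr ⟨l, mem_Icc.mpr (by constructor <;> nlinarith), sq l⟩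
  calc ∑ n ∈ Icc 1 N with IsSquare n, 1 / (n : ℝ)
      ≤ ∑ n ∈ (Icc 1 N).image (· ^ 2 : ℕ → ℕ), 1 / (n : ℝ) :=
        sum_le_sum_of_subset_of_nonneg hsub fun _ _ _ => by positivity
    _ = ∑ l ∈ Icc 1 N, 1 / (l : ℝ) ^ 2 := by
      rw [sum_image (Nat.pow_left_injective two_ne_zero).injOn]
      push_cast
      rfl
    _ ≤ 2 := sum_one_div_sq_le N

/-! ### The Pólya–Vinogradov inequality for primitive Dirichlet characters -/

/-- The double discrete Fourier transform of `χ`, evaluated at `-1`, is both `m` and the product of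
the Gauss sum with its complex conjugate. -/
theorem norm_gaussSum_stdAddChar_of_isPrimitive {m : ℕ} [NeZero m] {χ : DirichletCharacter ℂ m}
    (hχ : χ.IsPrimitive) : ‖gaussSum χ ZMod.stdAddChar‖ = √m := by
  set G := gaussSum χ ZMod.stdAddChar with hG
  have hdouble : G * star G = m := by
    have h := congrFun (ZMod.dft_dft (χ : ZMod m → ℂ)) (-1)
    rw [ZMod.dft_apply, ← Equiv.sum_comp (Equiv.neg (ZMod m))] at h
    simp only [hχ.fourierTransform_eq_inv_mul_gaussSum, Equiv.neg_apply, mul_neg, mul_one, neg_neg,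
      smul_eq_mul, map_one, ← hG] at h
    rw [← h, hG, star_gaussSum_eq, gaussSum.eq_def χ⁻¹, mul_sum]
    exact sum_congr rfl fun j _ => by rw [AddChar.inv_apply]; ring
  have hsq : ‖G‖ * ‖G‖ = m := by
    rw [← CStarRing.norm_self_mul_star, hdouble, Complex.norm_natCast]
  rw [← hsq, Real.sqrt_mul_self (norm_nonneg G)]

theorem abs_valMinAbs_mul_four_div_le_norm_stdAddChar_sub_one {m : ℕ} [NeZero m] (k : ZMod m) :
    4 * |(k.valMinAbs : ℝ)| / m ≤ ‖(ZMod.stdAddChar k : ℂ) - 1‖ := by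
  have hm : (0 : ℝ) < m := by exact_mod_cast NeZero.pos m
  have hexp : (ZMod.stdAddChar k : ℂ)
      = Complex.exp (Complex.I * ((2 * Real.pi * k.valMinAbs / m : ℝ) : ℂ)) := by
    conv_lhs => rw [← ZMod.coe_valMinAbs k, ZMod.stdAddChar_coe]
    congr 1
    push_cast
    ring
  have hhalf : |(k.valMinAbs : ℝ)| ≤ m / 2 := by
    have h : ((k.valMinAbs.natAbs : ℕ) : ℝ) ≤ ((m / 2 : ℕ) : ℝ) := by
      exact_mod_cast ZMod.natAbs_valMinAbs_le k
    rw [Nat.cast_natAbs, Int.cast_abs] at h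
    exact h.trans Nat.cast_div_le
  have hsin := Real.mul_abs_le_abs_sin (x := Real.pi * k.valMinAbs / m) (by
    rw [abs_div, abs_mul, abs_of_pos Real.pi_pos, abs_of_pos hm, div_le_iff₀ hm]
    nlinarith [Real.pi_pos])
  rw [abs_div, abs_mul, abs_of_pos Real.pi_pos, abs_of_pos hm] at hsin
  rw [hexp, Complex.norm_exp_I_mul_ofReal_sub_one, Real.norm_eq_abs, abs_mul, abs_two]
  calc 4 * |(k.valMinAbs : ℝ)| / m = 2 * (2 / Real.pi * (Real.pi * |(k.valMinAbs : ℝ)| / m)) := by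
        field_simp
        ring
    _ ≤ 2 * |Real.sin (Real.pi * k.valMinAbs / m)| := by gcongr
    _ = 2 * |Real.sin (2 * Real.pi * k.valMinAbs / m / 2)| := by ring_nf

theorem norm_geom_sum_stdAddChar_le {m : ℕ} [NeZero m] {k : ZMod m} (hk : k ≠ 0) (x : ℕ) :
    ‖∑ j ∈ range x, (ZMod.stdAddChar k : ℂ) ^ j‖ ≤ m / 2 * (1 / |(k.valMinAbs : ℝ)|) := by
  set w : ℂ := ZMod.stdAddChar k
  have hm : (0 : ℝ) < m := by exact_mod_cast NeZero.pos m
  have hv : 0 < |(k.valMinAbs : ℝ)| := by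
    rwa [abs_pos, Int.cast_ne_zero, Ne, ZMod.valMinAbs_eq_zero]
  have hunit : ‖w‖ = 1 := AddChar.norm_apply _ _
  have hgeom : ‖∑ j ∈ range x, w ^ j‖ * ‖w - 1‖ ≤ 2 := by
    rw [← norm_mul, geom_sum_mul]
    calc ‖w ^ x - 1‖ ≤ ‖w ^ x‖ + ‖(1 : ℂ)‖ := norm_sub_le _ _
      _ = 2 := by rw [norm_pow, hunit]; norm_num
  have hmul : ‖∑ j ∈ range x, w ^ j‖ * (4 * |(k.valMinAbs : ℝ)| / m) ≤ 2 :=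
    (mul_le_mul_of_nonneg_left (abs_valMinAbs_mul_four_div_le_norm_stdAddChar_sub_one k)
      (norm_nonneg _)).trans hgeom
  calc ‖∑ j ∈ range x, w ^ j‖ ≤ 2 / (4 * |(k.valMinAbs : ℝ)| / m) :=
        (le_div_iff₀ (by positivity)).mpr hmul
    _ = m / 2 * (1 / |(k.valMinAbs : ℝ)|) := by
      field_simp
      norm_num

theorem sum_range_one_div_succ_le (m : ℕ) : ∑ v ∈ range m, 1 / ((v : ℝ) + 1) ≤ 1 + Real.log m := by
  simpa [harmonic] using harmonic_le_one_add_log m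

/-- The term `k = 0` is `1 / 0 = 0`; the others are at most `1 / v + 1 / (m - v)` for the least
nonnegative residue `v` of `k`. -/
theorem sum_one_div_abs_valMinAbs_le (m : ℕ) [NeZero m] :
    ∑ k : ZMod m, 1 / |(k.valMinAbs : ℝ)| ≤ 2 * (1 + Real.log m) := by
  have hmin (v : ℕ) :
      1 / ((min v (m - v) : ℕ) : ℝ) ≤ 1 / (v : ℝ) + 1 / ((m - v : ℕ) : ℝ) := by
    rcases min_choice v (m - v) with h | h <;> rw [h]
    · exact le_add_of_nonneg_right (by positivity)
    · exact le_add_of_nonneg_left (by positivity)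
  have hleft : ∑ v ∈ range m, 1 / (v : ℝ) ≤ ∑ v ∈ range m, 1 / ((v : ℝ) + 1) := by
    have h := sum_range_succ' (fun v : ℕ => 1 / (v : ℝ)) m
    rw [sum_range_succ] at h
    push_cast at h
    have : (0 : ℝ) ≤ 1 / m := by positivity
    simp only [div_zero] at h
    linarith
  have hright : ∑ v ∈ range m, 1 / ((m - v : ℕ) : ℝ) = ∑ v ∈ range m, 1 / ((v : ℝ) + 1) := by
    rw [← sum_range_reflect]
    refine sum_congr rfl fun v hv => ?_
    have := mem_range.mp hv
    rw [show m - (m - 1 - v) = v + 1 by lia, Nat.cast_succ]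
  calc ∑ k : ZMod m, 1 / |(k.valMinAbs : ℝ)|
      = ∑ k : ZMod m, 1 / ((min k.val (m - k.val) : ℕ) : ℝ) := by
        refine sum_congr rfl fun k _ => ?_
        rw [← ZMod.valMinAbs_natAbs_eq_min, Nat.cast_natAbs, Int.cast_abs]
    _ = ∑ v ∈ range m, 1 / ((min v (m - v) : ℕ) : ℝ) :=
        sum_zmod_val m fun v => 1 / ((min v (m - v) : ℕ) : ℝ)
    _ ≤ ∑ v ∈ range m, (1 / (v : ℝ) + 1 / ((m - v : ℕ) : ℝ)) := sum_le_sum fun v _ => hmin v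
    _ ≤ 2 * (1 + Real.log m) := by
      rw [sum_add_distrib, hright]
      linarith [sum_range_one_div_succ_le m]

theorem natCast_mul_sum_range_eq_sum_dft {m : ℕ} [NeZero m] (Φ : ZMod m → ℂ) (x : ℕ) :
    m * ∑ n ∈ range x, Φ n
      = ∑ k : ZMod m, ZMod.dft Φ k * ∑ n ∈ range x, (ZMod.stdAddChar k : ℂ) ^ n := by
  have hinv (n : ℕ) :
      (m : ℂ) * Φ n = ∑ k : ZMod m, ZMod.dft Φ k * (ZMod.stdAddChar k : ℂ) ^ n := by
    have h := congrFun (ZMod.dft_dft Φ) (-(n : ZMod m))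
    rw [ZMod.dft_apply, neg_neg, smul_eq_mul] at h
    rw [← h]
    refine sum_congr rfl fun k _ => ?_
    rw [smul_eq_mul, mul_comm, ← AddChar.map_nsmul_eq_pow, nsmul_eq_mul, mul_neg, neg_neg,
      mul_comm k]
  simp only [mul_sum, hinv]
  exact sum_comm

/-- **Pólya–Vinogradov inequality**. -/
theorem norm_sum_range_le_of_isPrimitive {m : ℕ} (hm : 1 < m) {χ : DirichletCharacter ℂ m}
    (hχ : χ.IsPrimitive) (x : ℕ) : ‖∑ n ∈ range x, χ n‖ ≤ √m * (1 + Real.log m) := by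
  have : NeZero m := ⟨by lia⟩
  have : Fact (1 < m) := ⟨hm⟩
  have hm0 : (0 : ℝ) < m := by exact_mod_cast NeZero.pos m
  have hdft (k : ZMod m) : ‖ZMod.dft χ k‖ ≤ √m := by
    rw [hχ.fourierTransform_eq_inv_mul_gaussSum, norm_mul,
      norm_gaussSum_stdAddChar_of_isPrimitive hχ]
    exact mul_le_of_le_one_left (Real.sqrt_nonneg _) (DirichletCharacter.norm_le_one _ _)
  have hdft_zero : ZMod.dft χ 0 = 0 := by
    rw [hχ.fourierTransform_eq_inv_mul_gaussSum, neg_zero, MulChar.map_zero, zero_mul]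
  have hterm (k : ZMod m) : ‖ZMod.dft χ k * ∑ n ∈ range x, (ZMod.stdAddChar k : ℂ) ^ n‖
      ≤ √m * (m / 2 * (1 / |(k.valMinAbs : ℝ)|)) := by
    rcases eq_or_ne k 0 with rfl | hk
    · rw [hdft_zero, zero_mul, norm_zero]
      positivity
    · rw [norm_mul]
      exact mul_le_mul (hdft k) (norm_geom_sum_stdAddChar_le hk x) (norm_nonneg _)
        (Real.sqrt_nonneg _)
  refine le_of_mul_le_mul_left ?_ hm0
  calc m * ‖∑ n ∈ range x, χ n‖
      = ‖∑ k : ZMod m, ZMod.dft χ k * ∑ n ∈ range x, (ZMod.stdAddChar k : ℂ) ^ n‖ := by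
        rw [← natCast_mul_sum_range_eq_sum_dft, norm_mul, Complex.norm_natCast]
    _ ≤ ∑ k : ZMod m, √m * (m / 2 * (1 / |(k.valMinAbs : ℝ)|)) :=
        norm_sum_le_of_le _ fun k _ => hterm k
    _ = √m * (m / 2 * ∑ k : ZMod m, 1 / |(k.valMinAbs : ℝ)|) := by rw [← mul_sum, ← mul_sum]
    _ ≤ √m * (m / 2 * (2 * (1 + Real.log m))) := by
      gcongr
      exact sum_one_div_abs_valMinAbs_le m
    _ = m * (√m * (1 + Real.log m)) := by ring

/-! ### The Jacobi symbol in its upper argument -/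

theorem abs_jacobiSym_le_one (a : ℤ) (m : ℕ) : |(jacobiSym a m : ℝ)| ≤ 1 := by
  rcases jacobiSym.trichotomy a m with h | h | h <;> simp [h]

theorem jacobiSym_natCast_eq_zero_iff {n m : ℕ} [NeZero m] :
    jacobiSym (n : ℤ) m = 0 ↔ ¬ n.Coprime m :=
  jacobiSym.eq_zero_iff_not_coprime

theorem jacobiSym_mul_eq_of_modEq {a c n x y : ℕ} (ha : a ≠ 0) (hc : c ≠ 0) (hx : n ≡ x [MOD a])
    (hy : n ≡ y [MOD c]) :
    jacobiSym (n : ℤ) (a * c) = jacobiSym (x : ℤ) a * jacobiSym (y : ℤ) c := by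
  rw [jacobiSym.mul_right' _ ha hc, jacobiSym.mod_left' (Int.natCast_modEq_iff.mpr hx),
    jacobiSym.mod_left' (Int.natCast_modEq_iff.mpr hy)]

theorem exists_jacobiSym_prime_eq_neg_one {p : ℕ} (hp : p.Prime) (hodd : Odd p) :
    ∃ r : ℕ, jacobiSym (r : ℤ) p = -1 := by
  have : Fact p.Prime := ⟨hp⟩
  obtain ⟨r, hr⟩ := FiniteField.exists_nonsquare (F := ZMod p) <| by
    rw [ZMod.ringChar_zmod_n]
    rintro rfl
    exact absurd hodd (by decide)
  exact ⟨r.val, ZMod.nonsquare_iff_jacobiSym_eq_neg_one.mpr (by simpa using hr)⟩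

theorem not_isSquare_of_squarefree {m : ℕ} (hm : m ≠ 1) (h : Squarefree m) : ¬ IsSquare m := by
  rintro ⟨r, rfl⟩
  have hr : r = 1 := Nat.isUnit_iff.mp (h r dvd_rfl)
  exact hm (by rw [hr])

theorem exists_prime_odd_factorization {m : ℕ} (hm : m ≠ 0) (hsq : ¬ IsSquare m) :
    ∃ p, p.Prime ∧ Odd (m.factorization p) := by
  obtain ⟨a, b, ha, hb, rfl, hasq⟩ := Nat.sq_mul_squarefree_of_pos hm.bot_lt
  have ha1 : a ≠ 1 := by
    rintro rfl
    exact hsq ⟨b, by ring⟩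
  obtain ⟨p, hp, hpa⟩ := Nat.exists_prime_and_dvd ha1
  have hfac : a.factorization p = 1 := le_antisymm (hasq.natFactorization_le_one p)
    ((hp.dvd_iff_one_le_factorization ha.ne').mp hpa)
  refine ⟨p, hp, b.factorization p, ?_⟩
  rw [Nat.factorization_mul (by positivity) ha.ne', Nat.factorization_pow]
  simp [hfac]

theorem exists_jacobiSym_eq_neg_one {m : ℕ} (hm : Odd m) (hsq : ¬ IsSquare m) :
    ∃ k : ℕ, jacobiSym (k : ℤ) m = -1 := by
  have hm0 := hm.pos.ne'
  obtain ⟨p, hp, hodd⟩ := exists_prime_odd_factorization hm0 hsq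
  have hpm : p ∣ m := Nat.dvd_of_factorization_pos hodd.pos.ne'
  obtain ⟨r, hr⟩ := exists_jacobiSym_prime_eq_neg_one hp (hm.of_dvd_nat hpm)
  have hcop : (p ^ m.factorization p).Coprime (m / p ^ m.factorization p) :=
    (Nat.coprime_ordCompl hp hm0).pow_left _
  obtain ⟨k, hkr, hk1⟩ := Nat.chineseRemainder hcop r 1
  refine ⟨k, ?_⟩
  rw [← Nat.ordProj_mul_ordCompl_eq_self m p,
    jacobiSym_mul_eq_of_modEq (pow_ne_zero _ hp.ne_zero) (Nat.ordCompl_pos p hm0).ne' hkr hk1,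
    jacobiSym.pow_right, hr, hodd.neg_one_pow, Nat.cast_one, jacobiSym.one_left, mul_one]

theorem jacobiSym_mod_natCast (n m : ℕ) : jacobiSym ((n % m : ℕ) : ℤ) m = jacobiSym (n : ℤ) m := by
  rw [Int.natCast_mod, ← jacobiSym.mod_left]

/-- The Jacobi symbol `(·/m)` as a complex Dirichlet character modulo `m`. -/
noncomputable def jacobiChar (m : ℕ) [NeZero m] : DirichletCharacter ℂ m where
  toFun x := jacobiSym (x.val : ℤ) m
  map_one' := by
    rw [ZMod.val_one_eq_one_mod, jacobiSym_mod_natCast, Nat.cast_one, jacobiSym.one_left,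
      Int.cast_one]
  map_mul' x y := by
    rw [ZMod.val_mul, jacobiSym_mod_natCast, Nat.cast_mul, jacobiSym.mul_left, Int.cast_mul]
  map_nonunit' x hx := by
    rw [Int.cast_eq_zero, jacobiSym_natCast_eq_zero_iff, ← ZMod.isUnit_iff_coprime,
      ZMod.natCast_zmod_val]
    exact hx

theorem jacobiChar_natCast (m : ℕ) [NeZero m] (k : ℕ) :
    jacobiChar m (k : ZMod m) = jacobiSym (k : ℤ) m := by
  change ((jacobiSym ((k : ZMod m).val : ℤ) m : ℤ) : ℂ) = _
  rw [ZMod.val_natCast, jacobiSym_mod_natCast]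

theorem exists_modEq_one_jacobiSym_eq_neg_one {m d : ℕ} (hm : Odd m) (hs : Squarefree m)
    (hdm : d ∣ m) (hne : d ≠ m) : ∃ n : ℕ, n ≡ 1 [MOD d] ∧ jacobiSym (n : ℤ) m = -1 := by
  obtain ⟨c, rfl⟩ := hdm
  obtain ⟨hd, hc⟩ := mul_ne_zero_iff.mp hm.pos.ne'
  have hcsq : ¬ IsSquare c :=
    not_isSquare_of_squarefree (fun hc1 => hne (by rw [hc1, mul_one])) hs.of_mul_right
  obtain ⟨k, hk⟩ := exists_jacobiSym_eq_neg_one (hm.of_dvd_nat ⟨d, mul_comm d c⟩) hcsq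
  obtain ⟨n, hn1, hnk⟩ := Nat.chineseRemainder (Nat.coprime_of_squarefree_mul hs) 1 k
  refine ⟨n, hn1, ?_⟩
  rw [jacobiSym_mul_eq_of_modEq hd hc hn1 hnk, hk, Nat.cast_one, jacobiSym.one_left, one_mul]

theorem jacobiChar_isPrimitive (m : ℕ) [NeZero m] (hm : Odd m) (hs : Squarefree m) :
    (jacobiChar m).IsPrimitive := by
  rw [DirichletCharacter.isPrimitive_def]
  by_contra hne
  have hdm := (jacobiChar m).conductor_dvd_level
  obtain ⟨n, hn1, hn⟩ := exists_modEq_one_jacobiSym_eq_neg_one hm hs hdm hne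
  have hcop : n.Coprime m := by
    by_contra h
    exact absurd (hn.symm.trans (jacobiSym_natCast_eq_zero_iff.mpr h)) (by decide)
  have hker : ZMod.unitOfCoprime n hcop ∈ (ZMod.unitsMap hdm).ker := by
    rw [MonoidHom.mem_ker, Units.ext_iff, ZMod.unitsMap_val, ZMod.coe_unitOfCoprime, Units.val_one,
      ZMod.cast_natCast hdm]
    exact_mod_cast (ZMod.natCast_eq_natCast_iff n 1 _).mpr hn1
  have hone := (DirichletCharacter.factorsThrough_iff_ker_unitsMap hdm).mp
    (jacobiChar m).factorsThrough_conductor hker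
  have hval : jacobiChar m n = 1 := by
    simpa [Units.ext_iff] using hone
  rw [jacobiChar_natCast, hn] at hval
  norm_num at hval

theorem abs_sum_jacobiSym_le_of_squarefree {m : ℕ} (hm1 : 1 < m) (hm : Odd m) (hs : Squarefree m)
    (x : ℕ) : |∑ n ∈ range x, (jacobiSym (n : ℤ) m : ℝ)| ≤ √m * (1 + Real.log m) := by
  have : NeZero m := ⟨by lia⟩
  have h := norm_sum_range_le_of_isPrimitive hm1 (jacobiChar_isPrimitive m hm hs) x
  simp only [jacobiChar_natCast] at h
  rw [← Real.norm_eq_abs, ← Complex.norm_real]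
  push_cast
  exact h

theorem jacobiSym_prime_sq_mul {p r : ℕ} (hp : p.Prime) (hr : r ≠ 0) (n : ℕ) :
    jacobiSym (n : ℤ) (p * p * r) = if p ∣ n then 0 else jacobiSym (n : ℤ) r := by
  have : NeZero p := ⟨hp.ne_zero⟩
  rw [jacobiSym.mul_right' _ (mul_ne_zero hp.ne_zero hp.ne_zero) hr,
    jacobiSym.mul_right' _ hp.ne_zero hp.ne_zero, ← sq]
  split_ifs with h
  · rw [jacobiSym_natCast_eq_zero_iff.mpr fun hcop => hp.coprime_iff_not_dvd.mp hcop.symm h]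
    simp
  · have hcop : Int.gcd n p = 1 := (hp.coprime_iff_not_dvd.mpr h).symm
    rw [jacobiSym.sq_one hcop, one_mul]

theorem sum_jacobiSym_prime_sq_mul {p r : ℕ} (hp : p.Prime) (hr : r ≠ 0) (x : ℕ) :
    ∑ n ∈ range x, jacobiSym (n : ℤ) (p * p * r) = ∑ n ∈ range x, jacobiSym (n : ℤ) r
      - jacobiSym (p : ℤ) r * ∑ k ∈ range (x ⌈/⌉ p), jacobiSym (k : ℤ) r := by
  have hmultiples : ∑ n ∈ range x with p ∣ n, jacobiSym (n : ℤ) r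
      = jacobiSym (p : ℤ) r * ∑ k ∈ range (x ⌈/⌉ p), jacobiSym (k : ℤ) r := by
    rw [sum_range_dvd hp.pos, mul_sum]
    exact sum_congr rfl fun k _ => by rw [Nat.cast_mul, jacobiSym.mul_left]
  rw [← hmultiples, sum_filter, ← sum_sub_distrib]
  refine sum_congr rfl fun n _ => ?_
  rw [jacobiSym_prime_sq_mul hp hr]
  split_ifs <;> ring

/-- Induction on `m`, starting from squarefree moduli: if `m = p² r`, then `(n/m)` is `(n/r)` with
the multiples of `p` removed, which costs a factor `2 ≤ p = √(m / r)`. -/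
theorem abs_sum_jacobiSym_le {m : ℕ} (hm : Odd m) (hsq : ¬ IsSquare m) (x : ℕ) :
    |∑ n ∈ range x, (jacobiSym (n : ℤ) m : ℝ)| ≤ √m * (1 + Real.log m) := by
  induction m using Nat.strong_induction_on generalizing x with
  | _ m ih =>
  by_cases hs : Squarefree m
  · have hm1 : m ≠ 1 := by
      rintro rfl
      exact hsq IsSquare.one
    exact abs_sum_jacobiSym_le_of_squarefree (by have := hm.pos; lia) hm hs x
  · simp only [Nat.squarefree_iff_prime_squarefree, not_forall, not_not] at hs
    obtain ⟨p, hp, r, rfl⟩ := hs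
    have hr : r ≠ 0 := right_ne_zero_of_mul hm.pos.ne'
    have hp2 : (2 : ℝ) ≤ p := by exact_mod_cast hp.two_le
    have hr1 : (1 : ℝ) ≤ r := by exact_mod_cast Nat.one_le_iff_ne_zero.mpr hr
    have hlt : r < p * p * r :=
      lt_mul_of_one_lt_left hr.bot_lt (one_lt_mul'' hp.one_lt hp.one_lt)
    have hbound := ih r hlt (hm.of_dvd_nat (dvd_mul_left r _)) fun ⟨s, hs⟩ =>
      hsq ⟨p * s, by rw [hs]; ring⟩
    have : 0 ≤ Real.log r := Real.log_nonneg hr1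
    have hsum := congrArg (Int.cast (R := ℝ)) (sum_jacobiSym_prime_sq_mul hp hr x)
    push_cast at hsum
    calc |∑ n ∈ range x, (jacobiSym (n : ℤ) (p * p * r) : ℝ)|
        ≤ √r * (1 + Real.log r) + 1 * (√r * (1 + Real.log r)) := by
          rw [hsum]
          refine (abs_sub _ _).trans (add_le_add (hbound x) ?_)
          rw [abs_mul]
          exact mul_le_mul (abs_jacobiSym_le_one _ _) (hbound _) (abs_nonneg _) zero_le_one
      _ = 2 * √r * (1 + Real.log r) := by ring
      _ ≤ p * √r * (1 + Real.log (p * p * r : ℕ)) := by gcongr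
      _ = √(p * p * r : ℕ) * (1 + Real.log (p * p * r : ℕ)) := by
        push_cast
        rw [Real.sqrt_mul (by positivity), Real.sqrt_mul_self (by positivity)]

/-! ### Positivity of truncated `L`-series -/

section TruncatedSeries

variable {a : ℕ → ℝ} {B : ℝ}

theorem sum_Ico_mul_le_of_abs_sum_le (ha : ∀ x, |∑ n ∈ range x, a n| ≤ B) {f : ℕ → ℝ} {M : ℕ}
    (hf : AntitoneOn f (Set.Ici M)) (hf0 : ∀ n, M ≤ n → 0 ≤ f n) (K : ℕ) :
    ∑ n ∈ Ico M K, a n * f n ≤ 2 * B * f M := by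
  have h := (Real.le_norm_self _).trans (norm_sum_Ico_smul_le hf hf0 ha K)
  simpa only [smul_eq_mul, mul_comm (f _)] using h

theorem sum_Icc_div_le_add (ha : ∀ x, |∑ n ∈ range x, a n| ≤ B) {N K : ℕ} (hNK : N ≤ K) :
    ∑ n ∈ Icc 1 K, a n / n ≤ ∑ n ∈ Icc 1 N, a n / n + 2 * B / (N + 1) := by
  have hanti : AntitoneOn (fun n : ℕ => (n : ℝ)⁻¹) (Set.Ici (N + 1)) := by
    intro i hi j _ hij
    have : 0 < i := lt_of_lt_of_le N.succ_pos hi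
    dsimp only
    gcongr
  have htail := sum_Ico_mul_le_of_abs_sum_le ha hanti (fun n _ => by positivity) (K + 1)
  simp only [← Ico_add_one_right_eq_Icc, div_eq_mul_inv] at htail ⊢
  rw [← sum_Ico_consecutive _ (Nat.le_add_left 1 N) (by lia : N + 1 ≤ K + 1)]
  push_cast at htail
  linarith

theorem le_sum_Icc_div_add_of_tendsto (ha : ∀ x, |∑ n ∈ range x, a n| ≤ B) {L : ℝ}
    (hL : Filter.Tendsto (fun N : ℕ => ∑ n ∈ Icc 1 N, a n / n) Filter.atTop (nhds L)) (N : ℕ) :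
    L ≤ ∑ n ∈ Icc 1 N, a n / n + 2 * B / (N + 1) :=
  le_of_tendsto hL <| (Filter.eventually_ge_atTop N).mono fun _ => sum_Icc_div_le_add ha

end TruncatedSeries

section CompletelyMultiplicative

variable {χ : ℕ →*₀ ℝ}

/-- Summability and the Euler product, all of whose factors are positive. -/
theorem summable_mul_rpow_neg_and_tsum_nonneg (hχ : ∀ n, |χ n| ≤ 1) {s : ℝ} (hs : 1 < s) :
    (Summable fun n : ℕ => χ n * (n : ℝ) ^ (-s)) ∧ 0 ≤ ∑' n : ℕ, χ n * (n : ℝ) ^ (-s) := by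
  let f : ℕ →*₀ ℝ :=
    { toFun n := χ n * (n : ℝ) ^ (-s)
      map_zero' := by rw [map_zero, zero_mul]
      map_one' := by simp
      map_mul' x y := by
        rw [map_mul, Nat.cast_mul, Real.mul_rpow x.cast_nonneg y.cast_nonneg]
        ring }
  have hle (n : ℕ) : ‖f n‖ ≤ (n : ℝ) ^ (-s) := by
    have hpow : (0 : ℝ) ≤ (n : ℝ) ^ (-s) := by positivity
    change ‖χ n * (n : ℝ) ^ (-s)‖ ≤ _
    rw [norm_mul, Real.norm_of_nonneg hpow]
    exact mul_le_of_le_one_left hpow (hχ n)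
  have hsum : Summable (‖f ·‖) :=
    (Real.summable_nat_rpow.mpr (neg_lt_neg hs)).of_nonneg_of_le (fun _ => norm_nonneg _) hle
  refine ⟨hsum.of_norm, ge_of_tendsto (EulerProduct.eulerProduct_completely_multiplicative hsum)
    (.of_forall fun n => prod_nonneg fun p hp => ?_)⟩
  have hp1 : (1 : ℝ) ≤ p := by exact_mod_cast (Nat.prime_of_mem_primesBelow hp).one_lt.le
  rw [inv_nonneg, sub_nonneg]
  exact (le_abs_self _).trans <|
    (hle p).trans (Real.rpow_le_one_of_one_le_of_nonpos hp1 (by linarith))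

theorem sum_Icc_mul_rpow_add_nonneg (hχ : ∀ n, |χ n| ≤ 1) {B : ℝ}
    (hB : ∀ x, |∑ n ∈ range x, χ n| ≤ B) (N : ℕ) {s : ℝ} (hs : 1 < s) :
    0 ≤ ∑ n ∈ Icc 1 N, χ n * (n : ℝ) ^ (-s) + 2 * B * ((N + 1 : ℕ) : ℝ) ^ (-s) := by
  obtain ⟨hsum, hnonneg⟩ := summable_mul_rpow_neg_and_tsum_nonneg hχ hs
  have hanti : AntitoneOn (fun n : ℕ => (n : ℝ) ^ (-s)) (Set.Ici (N + 1)) := by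
    intro i hi j _ hij
    have : 0 < i := lt_of_lt_of_le N.succ_pos hi
    exact Real.rpow_le_rpow_of_nonpos (by exact_mod_cast this) (by exact_mod_cast hij)
      (by linarith)
  refine hnonneg.trans (le_of_tendsto hsum.hasSum.tendsto_sum_nat ?_)
  filter_upwards [Filter.eventually_ge_atTop (N + 1)] with K hK
  rw [← Ico_add_one_right_eq_Icc, ← sum_range_add_sum_Ico _ hK,
    sum_range_eq_add_Ico _ (by lia : 0 < N + 1), map_zero, zero_mul, zero_add]
  linarith [sum_Ico_mul_le_of_abs_sum_le hB hanti (fun n _ => by positivity) K]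

/-- A quantitative form of `L(1, χ) ≥ 0`: the analogous inequality for `s > 1` passes to the limit
`s → 1`, because only the first `N` terms and the tail bound remain. -/
theorem sum_Icc_div_add_nonneg (hχ : ∀ n, |χ n| ≤ 1) {B : ℝ}
    (hB : ∀ x, |∑ n ∈ range x, χ n| ≤ B) (N : ℕ) :
    0 ≤ ∑ n ∈ Icc 1 N, χ n / n + 2 * B / (N + 1) := by
  have hpow (n : ℕ) (hn : 0 < n) : Filter.Tendsto (fun s : ℝ => (n : ℝ) ^ (-s))
      (nhdsWithin 1 (Set.Ioi 1)) (nhds (n : ℝ)⁻¹) := by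
    have hcont : Continuous fun s : ℝ => (n : ℝ) ^ (-s) :=
      continuous_const.rpow continuous_neg fun _ => Or.inl (by positivity)
    rw [← Real.rpow_neg_one]
    exact (hcont.tendsto 1).mono_left nhdsWithin_le_nhds
  have hlim : Filter.Tendsto (fun s : ℝ => ∑ n ∈ Icc 1 N, χ n * (n : ℝ) ^ (-s)
        + 2 * B * ((N + 1 : ℕ) : ℝ) ^ (-s)) (nhdsWithin 1 (Set.Ioi 1))
      (nhds (∑ n ∈ Icc 1 N, χ n * (n : ℝ)⁻¹ + 2 * B * ((N + 1 : ℕ) : ℝ)⁻¹)) :=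
    (tendsto_finsetSum _ fun n hn => (hpow n (mem_Icc.mp hn).1).const_mul _).add
      ((hpow (N + 1) N.succ_pos).const_mul _)
  simp only [← div_eq_mul_inv, Nat.cast_succ] at hlim
  refine ge_of_tendsto hlim ?_
  filter_upwards [self_mem_nhdsWithin] with s hs
  exact_mod_cast sum_Icc_mul_rpow_add_nonneg hχ hB N hs

end CompletelyMultiplicative

/-- The Jacobi symbol `(·/m)`, `m > 1`, as a completely multiplicative real-valued function. -/
noncomputable def jacobiHom {m : ℕ} (hm : 1 < m) : ℕ →*₀ ℝ where
  toFun n := jacobiSym (n : ℤ) m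
  map_zero' := by rw [Nat.cast_zero, jacobiSym.zero_left hm, Int.cast_zero]
  map_one' := by rw [Nat.cast_one, jacobiSym.one_left, Int.cast_one]
  map_mul' x y := by rw [Nat.cast_mul, jacobiSym.mul_left, Int.cast_mul]

/-- The partial sum `∑_{n ≤ N} (n/m)/n` of the series defining `L(1, (·/m))`. -/
noncomputable def truncatedL (N m : ℕ) : ℝ := ∑ n ∈ Icc 1 N, (jacobiSym (n : ℤ) m : ℝ) / n

theorem truncatedL_nonneg_of_isSquare {m : ℕ} (hm : m ≠ 0) (hsq : IsSquare m) (N : ℕ) :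
    0 ≤ truncatedL N m := by
  obtain ⟨r, rfl⟩ := hsq
  have hr : r ≠ 0 := left_ne_zero_of_mul hm
  refine sum_nonneg fun n _ => div_nonneg ?_ n.cast_nonneg
  rw [jacobiSym.mul_right' _ hr hr, Int.cast_mul]
  exact mul_self_nonneg _

/-- The tail bound for `truncatedL N m` that is uniform in the odd nonsquare moduli `m ≤ Y`. -/
noncomputable def tailBound (Y N : ℕ) : ℝ := 2 * (√Y * (1 + Real.log Y)) / (N + 1)

theorem abs_sum_jacobiSym_le_of_le {m Y : ℕ} (hm : Odd m) (hsq : ¬ IsSquare m) (hmY : m ≤ Y)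
    (x : ℕ) : |∑ n ∈ range x, (jacobiSym (n : ℤ) m : ℝ)| ≤ √Y * (1 + Real.log Y) := by
  have hm0 : 0 < m := hm.pos
  have : 0 ≤ Real.log m := Real.log_natCast_nonneg m
  exact (abs_sum_jacobiSym_le hm hsq x).trans (by gcongr)

theorem tailBound_nonneg (Y N : ℕ) : 0 ≤ tailBound Y N := by
  have := Real.log_natCast_nonneg Y
  unfold tailBound
  positivity

theorem truncatedL_add_tailBound_nonneg {m Y : ℕ} (hm : Odd m) (hmY : m ≤ Y) (N : ℕ) :
    0 ≤ truncatedL N m + tailBound Y N := by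
  by_cases hsq : IsSquare m
  · exact add_nonneg (truncatedL_nonneg_of_isSquare hm.pos.ne' hsq N) (tailBound_nonneg Y N)
  · have hm1 : 1 < m := lt_of_le_of_ne hm.pos fun h => hsq (h ▸ IsSquare.one)
    exact sum_Icc_div_add_nonneg (χ := jacobiHom hm1) (fun n => abs_jacobiSym_le_one n m)
      (abs_sum_jacobiSym_le_of_le hm hsq hmY) N

theorem le_truncatedL_add_tailBound {m Y : ℕ} (hm : Odd m) (hsq : ¬ IsSquare m) (hmY : m ≤ Y)
    {L : ℝ} (hL : Filter.Tendsto (truncatedL · m) Filter.atTop (nhds L)) (N : ℕ) :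
    L ≤ truncatedL N m + tailBound Y N :=
  le_sum_Icc_div_add_of_tendsto (abs_sum_jacobiSym_le_of_le hm hsq hmY) hL N

/-! ### The Jacobi symbol in its lower argument -/

/-- The completely multiplicative function that is `k ↦ (n/k)` on odd `k` and zero on even `k`. -/
noncomputable def oddJacobi (n : ℕ) : ℕ →*₀ ℝ where
  toFun k := if Odd k then (jacobiSym (n : ℤ) k : ℝ) else 0
  map_zero' := if_neg (by decide)
  map_one' := by rw [if_pos odd_one, jacobiSym.one_right, Int.cast_one]
  map_mul' a b := by
    by_cases hab : Odd a ∧ Odd b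
    · rw [if_pos (hab.1.mul hab.2), if_pos hab.1, if_pos hab.2,
        jacobiSym.mul_right' _ hab.1.pos.ne' hab.2.pos.ne', Int.cast_mul]
    · rw [if_neg (Nat.odd_mul.not.mpr hab)]
      rcases not_and_or.mp hab with h | h <;> rw [if_neg h] <;> simp

theorem oddJacobi_of_odd (n : ℕ) {k : ℕ} (hk : Odd k) : oddJacobi n k = jacobiSym (n : ℤ) k :=
  if_pos hk

theorem oddJacobi_of_not_odd (n : ℕ) {k : ℕ} (hk : ¬ Odd k) : oddJacobi n k = 0 :=
  if_neg hk

theorem abs_oddJacobi_le_one (n k : ℕ) : |oddJacobi n k| ≤ 1 := by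
  by_cases hk : Odd k
  · exact oddJacobi_of_odd n hk ▸ abs_jacobiSym_le_one n k
  · rw [oddJacobi_of_not_odd n hk, abs_zero]
    exact zero_le_one

theorem oddJacobi_periodic (n : ℕ) : Function.Periodic (oddJacobi n) (4 * n) := by
  intro k
  have hiff : Odd (k + 4 * n) ↔ Odd k := by simp only [Nat.odd_iff]; lia
  by_cases hk : Odd k
  · rw [oddJacobi_of_odd n hk, oddJacobi_of_odd n (hiff.mpr hk),
      jacobiSym.mod_right' n (hiff.mpr hk), Nat.add_mod_right, ← jacobiSym.mod_right' n hk]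
  · rw [oddJacobi_of_not_odd n hk, oddJacobi_of_not_odd n (hiff.not.mpr hk)]

theorem jacobiSym_two_pow_mul {j r k : ℕ} (hr : Odd r) (hk : k % 4 = 1) :
    jacobiSym ((2 ^ j * r : ℕ) : ℤ) k = ZMod.χ₈ k ^ j * jacobiSym (k : ℤ) r := by
  have hodd : Odd k := Nat.odd_iff.mpr (by lia)
  rw [Nat.cast_mul, Nat.cast_pow, Nat.cast_two, jacobiSym.mul_left, jacobiSym.pow_left,
    jacobiSym.at_two hodd, jacobiSym.quadratic_reciprocity_one_mod_four' hr hk]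

/-- Write `n = 2^j r` with `r` odd. If `r` is a square then `j` is odd and some `k ≡ 5` mod `8`
works; otherwise some `k ≡ 1` mod `8` works, by quadratic reciprocity. -/
theorem exists_odd_jacobiSym_eq_neg_one {n : ℕ} (hsq : ¬ IsSquare n) :
    ∃ k : ℕ, Odd k ∧ jacobiSym (n : ℤ) k = -1 := by
  have hn : n ≠ 0 := by
    rintro rfl
    exact hsq IsSquare.zero
  obtain ⟨j, r, hr, rfl⟩ := Nat.exists_eq_two_pow_mul_odd hn
  have hcop : Nat.Coprime 8 r := (Nat.coprime_two_left.mpr hr).pow_left 3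
  by_cases hrsq : IsSquare r
  · obtain ⟨s, hs⟩ := hrsq
    have hj : Odd j := by
      rw [← Nat.not_even_iff_odd]
      rintro ⟨i, hi⟩
      exact hsq ⟨2 ^ i * s, by rw [hi, hs]; ring⟩
    obtain ⟨k, hk5, hk1⟩ := Nat.chineseRemainder hcop 5 1
    have hk : k % 8 = 5 := hk5
    have hχ : ZMod.χ₈ (k : ZMod 8) = -1 := by
      rw [(ZMod.natCast_eq_natCast_iff k 5 8).mpr hk5]
      rfl
    refine ⟨k, Nat.odd_iff.mpr (by lia), ?_⟩
    rw [jacobiSym_two_pow_mul hr (by lia), hχ, hj.neg_one_pow,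
      jacobiSym.mod_left' (Int.natCast_modEq_iff.mpr hk1), Nat.cast_one, jacobiSym.one_left,
      mul_one]
  · obtain ⟨l, hl⟩ := exists_jacobiSym_eq_neg_one hr hrsq
    obtain ⟨k, hk1, hkl⟩ := Nat.chineseRemainder hcop 1 l
    have hk : k % 8 = 1 := hk1
    have hχ : ZMod.χ₈ (k : ZMod 8) = 1 := by
      rw [(ZMod.natCast_eq_natCast_iff k 1 8).mpr hk1]
      rfl
    refine ⟨k, Nat.odd_iff.mpr (by lia), ?_⟩
    rw [jacobiSym_two_pow_mul hr (by lia), hχ, one_pow, one_mul,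
      jacobiSym.mod_left' (Int.natCast_modEq_iff.mpr hkl), hl]

theorem coprime_four_mul_of_jacobiSym_ne_zero {n k : ℕ} (hk : Odd k)
    (h : jacobiSym (n : ℤ) k ≠ 0) : k.Coprime (4 * n) := by
  have : NeZero k := ⟨hk.pos.ne'⟩
  have hn : n.Coprime k := not_not.mp (jacobiSym_natCast_eq_zero_iff.not.mp h)
  exact ((Nat.coprime_two_right.mpr hk).pow_right 2).mul_right hn.symm

theorem abs_sum_oddJacobi_le {n : ℕ} (hsq : ¬ IsSquare n) (K : ℕ) :
    |∑ k ∈ range K, oddJacobi n k| ≤ 4 * n := by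
  have : NeZero (4 * n) := ⟨fun h => hsq ⟨0, by lia⟩⟩
  obtain ⟨k₀, hodd, hk₀⟩ := exists_odd_jacobiSym_eq_neg_one hsq
  have hval : oddJacobi n k₀ = -1 := by
    rw [oddJacobi_of_odd n hodd, hk₀, Int.cast_neg, Int.cast_one]
  have hcop := coprime_four_mul_of_jacobiSym_ne_zero hodd (by rw [hk₀]; decide)
  have hzero := sum_range_eq_zero_of_periodic_of_map_mul (oddJacobi_periodic n)
    (map_mul (oddJacobi n)) hcop (by rw [hval]; norm_num)
  simpa using norm_sum_range_le_of_periodic (NeZero.pos _) (oddJacobi_periodic n)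
    (abs_oddJacobi_le_one n) hzero K

/-! ### Quadratic divisor-sum majorants of `1 / τ` -/

section Majorant

open ArithmeticFunction (moebius)

theorem sum_mul_sum_filter_sq {ι κ : Type*} (t : Finset ι) (s : Finset κ) (a : ι → ℝ) (w : κ → ℝ)
    (R : ι → κ → Prop) [∀ i, DecidablePred (R i)] :
    ∑ i ∈ t, a i * (∑ d ∈ s with R i d, w d) ^ 2
      = ∑ d ∈ s, ∑ e ∈ s, w d * w e * ∑ i ∈ t with R i d ∧ R i e, a i := by
  have hterm : ∀ i ∈ t, a i * (∑ d ∈ s with R i d, w d) ^ 2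
      = ∑ d ∈ s, ∑ e ∈ s, w d * w e * (if R i d ∧ R i e then a i else 0) := fun i _ => by
    rw [sq, sum_filter, sum_mul_sum, mul_sum]
    refine sum_congr rfl fun d _ => ?_
    rw [mul_sum]
    refine sum_congr rfl fun e _ => ?_
    by_cases hd : R i d <;> by_cases he : R i e <;> simp [hd, he, mul_comm]
  rw [sum_congr rfl hterm, sum_comm]
  refine sum_congr rfl fun d _ => ?_
  rw [sum_comm]
  exact sum_congr rfl fun e _ => by rw [sum_filter, mul_sum]

/-- The divisor-sum majorant of `1 / τ(m)` with sifting weights `ρ` supported on `S`: a sum of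
squares, one for each divisor `c` of `m`. -/
def sieveMajorant (S : Finset ℕ) (ρ : ℕ → ℝ) (m : ℕ) : ℝ :=
  ∑ c ∈ m.divisors, (∑ d ∈ S with c ∣ d ∧ d ∣ m, ρ d) ^ 2

/-- The coefficient of the condition `lcm(d, e) ∣ m` in `sieveMajorant S ρ m`. -/
def sieveCoeff (ρ : ℕ → ℝ) (d e : ℕ) : ℝ :=
  ρ d * ρ e * ((d.gcd e).divisors.card : ℝ)

variable {S : Finset ℕ} {ρ : ℕ → ℝ} {m : ℕ}

theorem sieveMajorant_nonneg (S : Finset ℕ) (ρ : ℕ → ℝ) (m : ℕ) : 0 ≤ sieveMajorant S ρ m :=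
  sum_nonneg fun _ _ => sq_nonneg _

theorem sum_divisors_moebius (n : ℕ) :
    ∑ c ∈ n.divisors, (moebius c : ℝ) = if n = 1 then 1 else 0 := by
  have h := congrArg (· n) ArithmeticFunction.moebius_mul_coe_zeta
  simp only [ArithmeticFunction.coe_mul_zeta_apply, ArithmeticFunction.one_apply] at h
  exact_mod_cast h

theorem abs_moebius_le_one (n : ℕ) : |(moebius n : ℝ)| ≤ 1 := by
  exact_mod_cast ArithmeticFunction.abs_moebius_le_one

theorem sum_divisors_moebius_mul_sum (h1 : 1 ∈ S) (hm : m ≠ 0) :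
    ∑ c ∈ m.divisors, (moebius c : ℝ) * ∑ d ∈ S with c ∣ d ∧ d ∣ m, ρ d = ρ 1 := by
  have hinner : ∀ d ∈ S, ∑ c ∈ m.divisors, (moebius c : ℝ) * (if c ∣ d ∧ d ∣ m then ρ d else 0)
      = if d = 1 then ρ d else 0 := by
    intro d _
    by_cases hdm : d ∣ m
    · simp only [hdm, and_true, mul_ite, mul_zero]
      rw [← sum_filter, Nat.divisors_filter_dvd_of_dvd hm hdm, ← sum_mul, sum_divisors_moebius,
        ite_mul, one_mul, zero_mul]
    · have hd1 : d ≠ 1 := by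
        rintro rfl
        exact hdm (one_dvd m)
      simp [hdm, hd1]
  simp only [sum_filter, mul_sum]
  rw [sum_comm, sum_congr rfl hinner, sum_ite_eq', if_pos h1]

/-- Cauchy–Schwarz against `μ(c)`, which detects `d = 1`. -/
theorem one_div_card_divisors_le_sieveMajorant (h1 : 1 ∈ S) (hρ : ρ 1 = 1) (hm : m ≠ 0) :
    1 / (m.divisors.card : ℝ) ≤ sieveMajorant S ρ m := by
  have hCS := sum_mul_sq_le_sq_mul_sq m.divisors (fun c => (moebius c : ℝ))
    (fun c => ∑ d ∈ S with c ∣ d ∧ d ∣ m, ρ d)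
  rw [sum_divisors_moebius_mul_sum h1 hm, hρ, one_pow] at hCS
  have hcard : ∑ c ∈ m.divisors, (moebius c : ℝ) ^ 2 ≤ m.divisors.card := by
    rw [← nsmul_one, ← sum_const]
    exact sum_le_sum fun c _ => (sq_le_one_iff_abs_le_one _).mpr (abs_moebius_le_one c)
  have hpos : (0 : ℝ) < m.divisors.card :=
    Nat.cast_pos.mpr (card_pos.mpr (Nat.nonempty_divisors.mpr hm))
  rw [div_le_iff₀' hpos]
  exact hCS.trans (mul_le_mul_of_nonneg_right hcard (sieveMajorant_nonneg S ρ m))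

theorem sieveMajorant_eq_sum_sieveCoeff (S : Finset ℕ) (ρ : ℕ → ℝ) (hm : m ≠ 0) :
    sieveMajorant S ρ m
      = ∑ d ∈ S, ∑ e ∈ S, if d.lcm e ∣ m then sieveCoeff ρ d e else 0 := by
  have hexp := sum_mul_sum_filter_sq m.divisors S (fun _ => 1) ρ (fun c d => c ∣ d ∧ d ∣ m)
  simp only [one_mul] at hexp
  rw [sieveMajorant, hexp]
  refine sum_congr rfl fun d _ => sum_congr rfl fun e _ => ?_
  rw [sum_const, nsmul_one, sieveCoeff]
  split_ifs with hlcm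
  · obtain ⟨hd, he⟩ := Nat.lcm_dvd_iff.mp hlcm
    congr 3
    ext c
    have hg : d.gcd e ≠ 0 := fun h => hm (zero_dvd_iff.mp (h ▸ (Nat.gcd_dvd_left d e).trans hd))
    simp only [mem_filter, Nat.mem_divisors, Nat.dvd_gcd_iff]
    have := fun h : c ∣ d => h.trans hd
    tauto
  · rw [filter_eq_empty_iff.mpr fun c _ h => hlcm (Nat.lcm_dvd h.1.2 h.2.2)]
    simp

theorem sum_sieveMajorant_mul (S : Finset ℕ) (ρ w : ℕ → ℝ) (Y : ℕ) :
    ∑ m ∈ Icc 1 Y, sieveMajorant S ρ m * w m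
      = ∑ d ∈ S, ∑ e ∈ S, sieveCoeff ρ d e * ∑ m ∈ Icc 1 Y with d.lcm e ∣ m, w m := by
  have hterm : ∀ m ∈ Icc 1 Y, sieveMajorant S ρ m * w m
      = ∑ d ∈ S, ∑ e ∈ S, sieveCoeff ρ d e * (if d.lcm e ∣ m then w m else 0) := fun m hm => by
    rw [sieveMajorant_eq_sum_sieveCoeff S ρ (by grind)]
    simp only [sum_mul, ite_mul, mul_ite, zero_mul, mul_zero]
  rw [sum_congr rfl hterm, sum_comm]
  refine sum_congr rfl fun d _ => ?_
  rw [sum_comm]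
  exact sum_congr rfl fun e _ => by rw [sum_filter, mul_sum]

theorem abs_natCast_div_sub_div_le_one (Y q : ℕ) : |((Y / q : ℕ) : ℝ) - Y / q| ≤ 1 := by
  rw [← Nat.floor_div_eq_div (K := ℝ), abs_sub_comm]
  have hfloor := Nat.floor_le (div_nonneg Y.cast_nonneg q.cast_nonneg : (0 : ℝ) ≤ Y / q)
  rw [abs_of_nonneg (sub_nonneg.mpr hfloor)]
  linarith [Nat.lt_floor_add_one ((Y : ℝ) / q)]

theorem sum_sieveMajorant_le (S : Finset ℕ) (ρ : ℕ → ℝ) (Y : ℕ) :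
    ∑ m ∈ Icc 1 Y, sieveMajorant S ρ m
      ≤ Y * ∑ d ∈ S, ∑ e ∈ S, sieveCoeff ρ d e / d.lcm e
        + ∑ d ∈ S, ∑ e ∈ S, |sieveCoeff ρ d e| := by
  have hexp := sum_sieveMajorant_mul S ρ (fun _ => 1) Y
  simp only [mul_one] at hexp
  rw [hexp]
  simp only [mul_sum, ← sum_add_distrib]
  gcongr with d _ e _
  set a := sieveCoeff ρ d e
  have hcount : (#{m ∈ Icc 1 Y | d.lcm e ∣ m} : ℝ) = ((Y / d.lcm e : ℕ) : ℝ) :=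
    congrArg Nat.cast (Nat.Ioc_filter_dvd_card_eq_div Y _)
  rw [← mul_sum, sum_const, nsmul_one, hcount]
  have herr : a * (((Y / d.lcm e : ℕ) : ℝ) - Y / d.lcm e) ≤ |a| :=
    (le_abs_self _).trans <| (abs_mul _ _).trans_le <|
      mul_le_of_le_one_right (abs_nonneg a) (abs_natCast_div_sub_div_le_one Y _)
  have hmain : (Y : ℝ) * (a / d.lcm e) = a * (Y / d.lcm e) := mul_div_left_comm _ _ _
  linarith

theorem abs_sum_Icc_dvd_le (χ : ℕ →*₀ ℝ) {B : ℝ} (hχ : ∀ k, |χ k| ≤ 1)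
    (hB : ∀ K, |∑ k ∈ range K, χ k| ≤ B) (Y q : ℕ) :
    |∑ m ∈ Icc 1 Y with q ∣ m, χ m| ≤ B := by
  have hrange : ∑ m ∈ Icc 1 Y with q ∣ m, χ m = ∑ m ∈ range (Y + 1) with q ∣ m, χ m := by
    rw [range_eq_Ico, sum_filter, sum_filter, sum_eq_sum_Ico_succ_bot (Nat.succ_pos Y), map_zero,
      ite_self, zero_add]
    rfl
  rcases q.eq_zero_or_pos with rfl | hq
  · rw [sum_eq_zero fun m hm => by grind]
    simpa using hB 0
  · rw [hrange, sum_range_dvd hq]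
    simp only [map_mul]
    rw [← mul_sum, abs_mul]
    exact (mul_le_of_le_one_left (abs_nonneg _) (hχ q)).trans (hB _)

theorem sum_sieveMajorant_mul_le (S : Finset ℕ) (ρ : ℕ → ℝ) (χ : ℕ →*₀ ℝ) {B : ℝ}
    (hχ : ∀ k, |χ k| ≤ 1) (hB : ∀ K, |∑ k ∈ range K, χ k| ≤ B) (Y : ℕ) :
    ∑ m ∈ Icc 1 Y, sieveMajorant S ρ m * χ m ≤ (∑ d ∈ S, ∑ e ∈ S, |sieveCoeff ρ d e|) * B := by
  rw [sum_sieveMajorant_mul]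
  simp only [sum_mul]
  refine sum_le_sum fun d _ => sum_le_sum fun e _ => ?_
  refine (le_abs_self _).trans ?_
  rw [abs_mul]
  exact mul_le_mul_of_nonneg_left (abs_sum_Icc_dvd_le χ hχ hB Y _) (abs_nonneg _)

end Majorant

/-! ### Selberg weights -/

section SelbergWeights

open ArithmeticFunction (moebius)

/-- The squarefree integers in `[1, D]`, the support of the sifting weights. -/
def squarefreeIcc (D : ℕ) : Finset ℕ := {d ∈ Icc 1 D | Squarefree d}

/-- Selberg's function `J` for the dimension at hand: on squarefree integers `τ(g) g` is the
divisor sum of `J`. -/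
noncomputable def selbergJ (f : ℕ) : ℝ := ∏ p ∈ f.primeFactors, (2 * (p : ℝ) - 1)

/-- The sum `V(D)` of `1 / J`, the reciprocal of the minimum of the sieve's quadratic form. -/
noncomputable def selbergSum (D : ℕ) : ℝ := ∑ f ∈ squarefreeIcc D, 1 / selbergJ f

/-- The weights minimizing the sieve's quadratic form under the constraint that the weight at `1`
is `1`. -/
noncomputable def selbergWeight (D d : ℕ) : ℝ :=
  moebius d * d / selbergSum D * ∑ f ∈ squarefreeIcc D with d ∣ f, 1 / selbergJ f

variable {D d e f g : ℕ}

theorem mem_squarefreeIcc : f ∈ squarefreeIcc D ↔ (1 ≤ f ∧ f ≤ D) ∧ Squarefree f := by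
  simp [squarefreeIcc]

theorem mem_squarefreeIcc_of_dvd (hg : g ∈ squarefreeIcc D) (h : f ∣ g) : f ∈ squarefreeIcc D := by
  rw [mem_squarefreeIcc] at *
  exact ⟨⟨Nat.pos_of_dvd_of_pos h hg.1.1, (Nat.le_of_dvd hg.1.1 h).trans hg.1.2⟩,
    hg.2.squarefree_of_dvd h⟩

theorem one_mem_squarefreeIcc (hD : 1 ≤ D) : 1 ∈ squarefreeIcc D :=
  mem_squarefreeIcc.mpr ⟨⟨le_rfl, hD⟩, squarefree_one⟩

theorem selbergJ_pos (f : ℕ) : 0 < selbergJ f := by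
  refine prod_pos fun p hp => ?_
  have hp2 : (2 : ℝ) ≤ p := by exact_mod_cast (Nat.prime_of_mem_primeFactors hp).two_le
  linarith

theorem card_divisors_eq_two_pow (hg : Squarefree g) :
    g.divisors.card = 2 ^ g.primeFactors.card := by
  rw [Nat.card_divisors hg.ne_zero]
  refine prod_eq_pow_card fun p hp => ?_
  rw [Nat.factorization_eq_one_of_squarefree hg (Nat.prime_of_mem_primeFactors hp)
    (Nat.dvd_of_mem_primeFactors hp)]

theorem sum_divisors_selbergJ (hg : Squarefree g) :
    ∑ f ∈ g.divisors, selbergJ f = (g.divisors.card : ℝ) * g := by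
  set j : ℕ → ℝ := fun p => 2 * (p : ℝ) - 1
  have hsum : ∑ f ∈ g.divisors, selbergJ f = ∏ p ∈ g.primeFactors, (1 + selbergJ p) := by
    have hmult := (ArithmeticFunction.IsMultiplicative.prodPrimeFactors
      j).prodPrimeFactors_one_add_of_squarefree hg
    have happly {n : ℕ} (hn : n ≠ 0) : ArithmeticFunction.prodPrimeFactors j n = selbergJ n :=
      ArithmeticFunction.prodPrimeFactors_apply hn
    rw [sum_congr rfl fun f hf => (happly (Nat.pos_of_mem_divisors hf).ne').symm, ← hmult]
    exact prod_congr rfl fun p hp => by rw [happly (Nat.prime_of_mem_primeFactors hp).ne_zero]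
  have hprime : ∀ p ∈ g.primeFactors, 1 + selbergJ p = 2 * p := fun p hp => by
    simp [selbergJ, (Nat.prime_of_mem_primeFactors hp).primeFactors]
  rw [hsum, prod_congr rfl hprime, prod_mul_distrib, prod_const, card_divisors_eq_two_pow hg,
    ← Nat.cast_prod, Nat.prod_primeFactors_of_squarefree hg, Nat.cast_pow, Nat.cast_ofNat]

theorem selbergJ_le (hf : Squarefree f) : selbergJ f ≤ (f.divisors.card : ℝ) * f := by
  rw [← sum_divisors_selbergJ hf]
  exact single_le_sum (f := selbergJ) (fun g _ => (selbergJ_pos g).le)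
    (Nat.mem_divisors_self f hf.ne_zero)

theorem selbergSum_pos (hD : 1 ≤ D) : 0 < selbergSum D :=
  sum_pos (fun f _ => one_div_pos.mpr (selbergJ_pos f)) ⟨1, one_mem_squarefreeIcc hD⟩

theorem selbergWeight_one (hD : 1 ≤ D) : selbergWeight D 1 = 1 := by
  have hV := (selbergSum_pos hD).ne'
  rw [selbergWeight, filter_true_of_mem fun f _ => one_dvd f, ← selbergSum,
    ArithmeticFunction.moebius_apply_one, Int.cast_one, Nat.cast_one, one_mul,
    one_div_mul_cancel hV]

theorem abs_selbergWeight_le (hD : 1 ≤ D) (d : ℕ) : |selbergWeight D d| ≤ d := by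
  have hV := selbergSum_pos hD
  have hJ (f : ℕ) : 0 ≤ 1 / selbergJ f := (one_div_pos.mpr (selbergJ_pos f)).le
  have hsum : ∑ f ∈ squarefreeIcc D with d ∣ f, 1 / selbergJ f ≤ selbergSum D :=
    sum_le_sum_of_subset_of_nonneg (filter_subset _ _) fun f _ _ => hJ f
  rw [selbergWeight, abs_mul, abs_div, abs_mul, abs_of_pos hV, Nat.abs_cast,
    abs_of_nonneg (sum_nonneg fun f _ => hJ f)]
  calc _ ≤ 1 * (d : ℝ) / selbergSum D * selbergSum D := by
        gcongr
        exacts [sum_nonneg fun f _ => hJ f, abs_moebius_le_one d]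
    _ = d := by rw [one_mul, div_mul_cancel₀ _ hV.ne']

/-- Möbius inversion over the multiples of `f`. -/
theorem sum_divisors_moebius_of_dvd (hf : f ≠ 0) (hg : Squarefree g) :
    ∑ d ∈ g.divisors with f ∣ d, (moebius d : ℝ) = if f = g then (moebius f : ℝ) else 0 := by
  by_cases hfg : f ∣ g
  · obtain ⟨h, rfl⟩ := hfg
    have hh : h ≠ 0 := right_ne_zero_of_mul hg.ne_zero
    have himage : {d ∈ (f * h).divisors | f ∣ d} = h.divisors.image (f * ·) := by
      ext d
      simp only [mem_filter, mem_image, Nat.mem_divisors]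
      constructor
      · rintro ⟨⟨hd, -⟩, c, rfl⟩
        exact ⟨c, ⟨Nat.dvd_of_mul_dvd_mul_left (Nat.pos_of_ne_zero hf) hd, hh⟩, rfl⟩
      · rintro ⟨c, ⟨hc, -⟩, rfl⟩
        exact ⟨⟨mul_dvd_mul_left f hc, hg.ne_zero⟩, dvd_mul_right f c⟩
    have hmul : ∀ c ∈ h.divisors, (moebius (f * c) : ℝ) = moebius f * (moebius c : ℝ) :=
      fun c hc => by
        rw [ArithmeticFunction.isMultiplicative_moebius.map_mul_of_coprime
          ((Nat.coprime_of_squarefree_mul hg).coprime_dvd_right (Nat.dvd_of_mem_divisors hc)),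
          Int.cast_mul]
    rw [himage, sum_image (mul_right_injective₀ hf).injOn, sum_congr rfl hmul, ← mul_sum,
      sum_divisors_moebius, mul_ite, mul_one, mul_zero]
    simp only [eq_comm (a := f), mul_eq_left₀ hf]
  · rw [filter_false_of_mem fun d hd h => hfg (h.trans (Nat.dvd_of_mem_divisors hd)), sum_empty,
      if_neg fun h => hfg h.dvd]

theorem sum_selbergWeight_div (hf : f ∈ squarefreeIcc D) :
    ∑ d ∈ squarefreeIcc D with f ∣ d, selbergWeight D d / d
      = (moebius f : ℝ) / (selbergJ f * selbergSum D) := by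
  have hexp : ∀ d ∈ squarefreeIcc D, selbergWeight D d / d
      = ∑ g ∈ squarefreeIcc D,
          1 / (selbergJ g * selbergSum D) * (if d ∣ g then (moebius d : ℝ) else 0) := by
    intro d hd
    have hd0 : (d : ℝ) ≠ 0 := Nat.cast_ne_zero.mpr (mem_squarefreeIcc.mp hd).2.ne_zero
    rw [selbergWeight, sum_filter, mul_sum, sum_div]
    refine sum_congr rfl fun g _ => ?_
    split_ifs
    · field_simp
    · simp
  have hinner : ∀ g ∈ squarefreeIcc D,
      ∑ d ∈ squarefreeIcc D with f ∣ d,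
          1 / (selbergJ g * selbergSum D) * (if d ∣ g then (moebius d : ℝ) else 0)
        = if f = g then (moebius f : ℝ) / (selbergJ f * selbergSum D) else 0 := by
    intro g hg
    have hdiv : {d ∈ {d ∈ squarefreeIcc D | f ∣ d} | d ∣ g} = {d ∈ g.divisors | f ∣ d} := by
      ext d
      simp only [mem_filter, Nat.mem_divisors]
      have hd := fun h : d ∣ g => mem_squarefreeIcc_of_dvd hg h
      have hg0 := (mem_squarefreeIcc.mp hg).2.ne_zero
      tauto
    rw [← mul_sum, ← sum_filter, hdiv, sum_divisors_moebius_of_dvd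
      (mem_squarefreeIcc.mp hf).2.ne_zero (mem_squarefreeIcc.mp hg).2]
    split_ifs with h
    · rw [h, one_div_mul_eq_div]
    · exact mul_zero _
  rw [sum_congr rfl fun d hd => hexp d (mem_filter.mp hd).1, sum_comm, sum_congr rfl hinner,
    sum_ite_eq, if_pos hf]

theorem filter_dvd_and_dvd_squarefreeIcc (hd : d ∈ squarefreeIcc D) :
    {f ∈ squarefreeIcc D | f ∣ d ∧ f ∣ e} = (d.gcd e).divisors := by
  ext f
  have hd0 := (mem_squarefreeIcc.mp hd).2.ne_zero
  have hf := fun h : f ∣ d => mem_squarefreeIcc_of_dvd hd h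
  have hg : d.gcd e ≠ 0 := fun h => hd0 (Nat.eq_zero_of_gcd_eq_zero_left h)
  simp only [mem_filter, Nat.mem_divisors, Nat.dvd_gcd_iff]
  tauto

theorem sieveCoeff_div_lcm (ρ : ℕ → ℝ) (hd : d ∈ squarefreeIcc D) (he : e ≠ 0) :
    sieveCoeff ρ d e / d.lcm e
      = ρ d / d * (ρ e / e) * ∑ f ∈ squarefreeIcc D with f ∣ d ∧ f ∣ e, selbergJ f := by
  have hdsq := (mem_squarefreeIcc.mp hd).2
  rw [filter_dvd_and_dvd_squarefreeIcc hd,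
    sum_divisors_selbergJ (hdsq.squarefree_of_dvd (Nat.gcd_dvd_left d e)), sieveCoeff]
  have hgl : (d.gcd e : ℝ) * d.lcm e = d * e := by exact_mod_cast Nat.gcd_mul_lcm d e
  have hd' : (d : ℝ) ≠ 0 := Nat.cast_ne_zero.mpr hdsq.ne_zero
  have he' : (e : ℝ) ≠ 0 := Nat.cast_ne_zero.mpr he
  have hl' : (d.lcm e : ℝ) ≠ 0 := Nat.cast_ne_zero.mpr (Nat.lcm_ne_zero hdsq.ne_zero he)
  field_simp
  linear_combination (-ρ d * ρ e * ((d.gcd e).divisors.card : ℝ)) * hgl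

theorem sum_sieveCoeff_selbergWeight_div_lcm (hD : 1 ≤ D) :
    ∑ d ∈ squarefreeIcc D, ∑ e ∈ squarefreeIcc D, sieveCoeff (selbergWeight D) d e / d.lcm e
      = 1 / selbergSum D := by
  have hdiag : ∑ d ∈ squarefreeIcc D, ∑ e ∈ squarefreeIcc D,
        sieveCoeff (selbergWeight D) d e / d.lcm e
      = ∑ f ∈ squarefreeIcc D,
          selbergJ f * (∑ d ∈ squarefreeIcc D with f ∣ d, selbergWeight D d / d) ^ 2 := by
    rw [sum_mul_sum_filter_sq]
    exact sum_congr rfl fun d hd => sum_congr rfl fun e he =>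
      sieveCoeff_div_lcm _ hd (mem_squarefreeIcc.mp he).2.ne_zero
  have hterm : ∀ f ∈ squarefreeIcc D,
      selbergJ f * (∑ d ∈ squarefreeIcc D with f ∣ d, selbergWeight D d / d) ^ 2
        = 1 / selbergJ f * (1 / selbergSum D ^ 2) := by
    intro f hf
    have hJ := (selbergJ_pos f).ne'
    have hmu : (moebius f : ℝ) ^ 2 = 1 := by
      exact_mod_cast ArithmeticFunction.moebius_sq_eq_one_of_squarefree (mem_squarefreeIcc.mp hf).2
    rw [sum_selbergWeight_div hf, div_pow, hmu]
    field_simp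
  have hV := (selbergSum_pos hD).ne'
  rw [hdiag, sum_congr rfl hterm, ← sum_mul, ← selbergSum]
  field_simp

theorem sum_abs_sieveCoeff_selbergWeight_le (hD : 1 ≤ D) :
    ∑ d ∈ squarefreeIcc D, ∑ e ∈ squarefreeIcc D, |sieveCoeff (selbergWeight D) d e|
      ≤ (D : ℝ) ^ 5 := by
  have hcard : (#(squarefreeIcc D) : ℝ) ≤ D := by
    exact_mod_cast (card_filter_le _ _).trans (Nat.card_Icc 1 D).le
  have hweight : ∀ d ∈ squarefreeIcc D, |selbergWeight D d| ≤ D := fun d hd =>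
    (abs_selbergWeight_le hD d).trans (Nat.cast_le.mpr (mem_squarefreeIcc.mp hd).1.2)
  have hcoeff : ∀ d ∈ squarefreeIcc D, ∀ e ∈ squarefreeIcc D,
      |sieveCoeff (selbergWeight D) d e| ≤ (D : ℝ) ^ 3 := by
    intro d hd e he
    have hdD := (mem_squarefreeIcc.mp hd).1
    have hgcd : ((d.gcd e).divisors.card : ℝ) ≤ D := by
      exact_mod_cast (Nat.card_divisors_le_self _).trans ((Nat.gcd_le_left e hdD.1).trans hdD.2)
    rw [sieveCoeff, abs_mul, abs_mul, Nat.abs_cast]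
    calc _ ≤ (D : ℝ) * D * D := by
          gcongr
          exacts [hweight d hd, hweight e he]
      _ = (D : ℝ) ^ 3 := by ring
  calc _ ≤ ∑ _d ∈ squarefreeIcc D, ∑ _e ∈ squarefreeIcc D, (D : ℝ) ^ 3 :=
        sum_le_sum fun d hd => sum_le_sum fun e he => hcoeff d hd e he
    _ = #(squarefreeIcc D) * (#(squarefreeIcc D) * (D : ℝ) ^ 3) := by simp
    _ ≤ D * (D * (D : ℝ) ^ 3) := by gcongr
    _ = (D : ℝ) ^ 5 := by ring

/-- The divisor-sum majorant of `1 / τ` of level `D` with Selberg's weights. -/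
noncomputable def selbergMajorant (D m : ℕ) : ℝ :=
  sieveMajorant (squarefreeIcc D) (selbergWeight D) m

theorem selbergMajorant_nonneg (D m : ℕ) : 0 ≤ selbergMajorant D m :=
  sieveMajorant_nonneg _ _ m

theorem one_div_card_divisors_le_selbergMajorant (hD : 1 ≤ D) {m : ℕ} (hm : m ≠ 0) :
    1 / (m.divisors.card : ℝ) ≤ selbergMajorant D m :=
  one_div_card_divisors_le_sieveMajorant (one_mem_squarefreeIcc hD) (selbergWeight_one hD) hm

theorem sum_selbergMajorant_le (hD : 1 ≤ D) (Y : ℕ) :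
    ∑ m ∈ Icc 1 Y, selbergMajorant D m ≤ Y / selbergSum D + (D : ℝ) ^ 5 := by
  have h := sum_sieveMajorant_le (squarefreeIcc D) (selbergWeight D) Y
  rw [sum_sieveCoeff_selbergWeight_div_lcm hD, mul_one_div] at h
  exact h.trans (add_le_add_right (sum_abs_sieveCoeff_selbergWeight_le hD) _)

theorem sum_selbergMajorant_mul_oddJacobi_le (hD : 1 ≤ D) (Y : ℕ) {n : ℕ} (hn : ¬ IsSquare n) :
    ∑ m ∈ Icc 1 Y, selbergMajorant D m * oddJacobi n m ≤ (D : ℝ) ^ 5 * (4 * n) :=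
  (sum_sieveMajorant_mul_le _ _ _ (abs_oddJacobi_le_one n) (abs_sum_oddJacobi_le hn) Y).trans <|
    mul_le_mul_of_nonneg_right (sum_abs_sieveCoeff_selbergWeight_le hD) (by positivity)

end SelbergWeights

/-! ### Lower bound for the Selberg sum -/

theorem log_add_one_le_sum_one_div (D : ℕ) :
    Real.log (D + 1) ≤ ∑ k ∈ Icc 1 D, 1 / (k : ℝ) := by
  simpa [harmonic_eq_sum_Icc] using log_add_one_le_harmonic D

/-- Write `k = b² a` with `a` squarefree. -/
theorem sum_one_div_le_two_mul_sum_squarefreeIcc (D : ℕ) :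
    ∑ k ∈ Icc 1 D, 1 / (k : ℝ) ≤ 2 * ∑ n ∈ squarefreeIcc D, 1 / (n : ℝ) := by
  set g : ℕ × ℕ → ℝ := fun x => 1 / (x.1 : ℝ) * (1 / (x.2 : ℝ) ^ 2)
  have hfiber : ∀ k ∈ Icc 1 D,
      1 / (k : ℝ) ≤ ∑ x ∈ squarefreeIcc D ×ˢ Icc 1 D with x.2 ^ 2 * x.1 = k, g x := by
    intro k hk
    rw [mem_Icc] at hk
    obtain ⟨a, b, ha, hb, rfl, hsq⟩ := Nat.sq_mul_squarefree_of_pos hk.1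
    have hak : a ≤ b ^ 2 * a := Nat.le_mul_of_pos_left a (by positivity)
    have hbk : b ≤ b ^ 2 * a :=
      (Nat.le_self_pow two_ne_zero b).trans (Nat.le_mul_of_pos_right _ ha)
    have hmem : (a, b) ∈ {x ∈ squarefreeIcc D ×ˢ Icc 1 D | x.2 ^ 2 * x.1 = b ^ 2 * a} := by
      rw [mem_filter, mem_product, mem_squarefreeIcc, mem_Icc]
      exact ⟨⟨⟨⟨ha, hak.trans hk.2⟩, hsq⟩, hb, hbk.trans hk.2⟩, rfl⟩
    calc 1 / ((b ^ 2 * a : ℕ) : ℝ) = g (a, b) := by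
          simp only [g, one_div_mul_one_div]
          push_cast
          rw [mul_comm]
      _ ≤ _ := single_le_sum (f := g) (fun _ _ => by positivity) hmem
  have hfactors : ∑ x ∈ squarefreeIcc D ×ˢ Icc 1 D, g x
      = (∑ n ∈ squarefreeIcc D, 1 / (n : ℝ)) * ∑ l ∈ Icc 1 D, 1 / (l : ℝ) ^ 2 := by
    rw [sum_product, sum_mul_sum]
  calc _ ≤ ∑ x ∈ squarefreeIcc D ×ˢ Icc 1 D, g x :=
        (sum_le_sum hfiber).trans <| sum_fiberwise_le_sum_of_sum_fiber_nonneg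
          fun _ _ => sum_nonneg fun _ _ => by positivity
    _ ≤ (∑ n ∈ squarefreeIcc D, 1 / (n : ℝ)) * 2 := by
        rw [hfactors]
        gcongr
        exact sum_one_div_sq_le D
    _ = _ := mul_comm _ _

theorem sum_divisorsAntidiagonal_one_div_card_mul {n : ℕ} (hn : Squarefree n) :
    ∑ x ∈ n.divisorsAntidiagonal,
        1 / ((x.1.divisors.card : ℝ) * x.1) * (1 / ((x.2.divisors.card : ℝ) * x.2))
      = 1 / (n : ℝ) := by
  have hterm : ∀ x ∈ n.divisorsAntidiagonal,
      1 / ((x.1.divisors.card : ℝ) * x.1) * (1 / ((x.2.divisors.card : ℝ) * x.2))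
        = 1 / ((n.divisors.card : ℝ) * n) := by
    rintro ⟨f, g⟩ hx
    obtain ⟨rfl, -⟩ := Nat.mem_divisorsAntidiagonal.mp hx
    rw [(Nat.coprime_of_squarefree_mul hn).card_divisors_mul, one_div_mul_one_div]
    push_cast
    ring
  have hcard : (n.divisors.card : ℝ) ≠ 0 :=
    Nat.cast_ne_zero.mpr (card_pos.mpr (Nat.nonempty_divisors.mpr hn.ne_zero)).ne'
  rw [sum_congr rfl hterm, sum_const, nsmul_eq_mul, ← Nat.map_div_right_divisors, card_map]
  field_simp

theorem sum_squarefreeIcc_one_div_le_selbergSum_sq (D : ℕ) :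
    ∑ n ∈ squarefreeIcc D, 1 / (n : ℝ) ≤ selbergSum D ^ 2 := by
  set g : ℕ → ℝ := fun f => 1 / ((f.divisors.card : ℝ) * f)
  have hg0 (f : ℕ) : 0 ≤ g f := by positivity
  have hle : ∑ f ∈ squarefreeIcc D, g f ≤ selbergSum D := sum_le_sum fun f hf =>
    one_div_le_one_div_of_le (selbergJ_pos f) (selbergJ_le (mem_squarefreeIcc.mp hf).2)
  have hfiber : ∀ n ∈ squarefreeIcc D, 1 / (n : ℝ)
      ≤ ∑ x ∈ squarefreeIcc D ×ˢ squarefreeIcc D with x.1 * x.2 = n, g x.1 * g x.2 := by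
    intro n hn
    have hsub : n.divisorsAntidiagonal
        ⊆ {x ∈ squarefreeIcc D ×ˢ squarefreeIcc D | x.1 * x.2 = n} := by
      intro x hx
      obtain ⟨rfl, -⟩ := Nat.mem_divisorsAntidiagonal.mp hx
      rw [mem_filter, mem_product]
      exact ⟨⟨mem_squarefreeIcc_of_dvd hn (dvd_mul_right _ _),
        mem_squarefreeIcc_of_dvd hn (dvd_mul_left _ _)⟩, rfl⟩
    rw [← sum_divisorsAntidiagonal_one_div_card_mul (mem_squarefreeIcc.mp hn).2]
    exact sum_le_sum_of_subset_of_nonneg hsub fun x _ _ =>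
      mul_nonneg (hg0 x.1) (hg0 x.2)
  calc _ ≤ ∑ x ∈ squarefreeIcc D ×ˢ squarefreeIcc D, g x.1 * g x.2 :=
        (sum_le_sum hfiber).trans <| sum_fiberwise_le_sum_of_sum_fiber_nonneg
          fun _ _ => sum_nonneg fun x _ => mul_nonneg (hg0 x.1) (hg0 x.2)
    _ = (∑ f ∈ squarefreeIcc D, g f) ^ 2 := by rw [sq, sum_mul_sum, sum_product]
    _ ≤ selbergSum D ^ 2 := pow_le_pow_left₀ (sum_nonneg fun f _ => hg0 f) hle 2

theorem log_add_one_le_two_mul_selbergSum_sq (D : ℕ) :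
    Real.log (D + 1) ≤ 2 * selbergSum D ^ 2 := by
  linarith [log_add_one_le_sum_one_div D, sum_one_div_le_two_mul_sum_squarefreeIcc D,
    sum_squarefreeIcc_one_div_le_selbergSum_sq D]

/-! ### The sifted sum -/

section SiftedSum

variable {D m : ℕ} {L : ℕ → ℝ}

theorem one_div_mul_sum_selbergMajorant_mul_oddJacobi_le (hD : 1 ≤ D) (Y : ℕ) {n : ℕ}
    (hn : n ≠ 0) :
    1 / (n : ℝ) * ∑ m ∈ Icc 1 Y, selbergMajorant D m * oddJacobi n m
      ≤ (if IsSquare n then 1 / (n : ℝ) * (Y / selbergSum D + (D : ℝ) ^ 5) else 0)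
        + 4 * (D : ℝ) ^ 5 := by
  have hn0 : (n : ℝ) ≠ 0 := Nat.cast_ne_zero.mpr hn
  split_ifs with hsq
  · have hle : ∑ m ∈ Icc 1 Y, selbergMajorant D m * oddJacobi n m
        ≤ Y / selbergSum D + (D : ℝ) ^ 5 :=
      (sum_le_sum fun m _ => mul_le_of_le_one_right (selbergMajorant_nonneg D m)
        (le_of_abs_le (abs_oddJacobi_le_one n m))).trans (sum_selbergMajorant_le hD Y)
    exact (mul_le_mul_of_nonneg_left hle (by positivity)).trans
      (le_add_of_nonneg_right (by positivity))
  · calc 1 / (n : ℝ) * ∑ m ∈ Icc 1 Y, selbergMajorant D m * oddJacobi n m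
        ≤ 1 / (n : ℝ) * ((D : ℝ) ^ 5 * (4 * n)) := by
          gcongr
          exact sum_selbergMajorant_mul_oddJacobi_le hD Y hsq
      _ = 0 + 4 * (D : ℝ) ^ 5 := by field_simp; ring

theorem sum_selbergMajorant_mul_truncatedL_eq (D N Y : ℕ) :
    ∑ m ∈ Icc 1 Y with Odd m, selbergMajorant D m * truncatedL N m
      = ∑ n ∈ Icc 1 N, 1 / (n : ℝ) * ∑ m ∈ Icc 1 Y, selbergMajorant D m * oddJacobi n m := by
  simp only [truncatedL, mul_sum]
  rw [sum_comm]
  refine sum_congr rfl fun n _ => ?_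
  rw [sum_filter]
  refine sum_congr rfl fun m _ => ?_
  split_ifs with hm
  · rw [oddJacobi_of_odd n hm]
    ring
  · rw [oddJacobi_of_not_odd n hm, mul_zero, mul_zero]

theorem sum_selbergMajorant_mul_truncatedL_le (hD : 1 ≤ D) (N Y : ℕ) :
    ∑ m ∈ Icc 1 Y with Odd m, selbergMajorant D m * truncatedL N m
      ≤ 2 * (Y / selbergSum D + (D : ℝ) ^ 5) + 4 * N * (D : ℝ) ^ 5 := by
  have hV := selbergSum_pos hD
  calc _ = ∑ n ∈ Icc 1 N, 1 / (n : ℝ) * ∑ m ∈ Icc 1 Y, selbergMajorant D m * oddJacobi n m :=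
        sum_selbergMajorant_mul_truncatedL_eq D N Y
    _ ≤ ∑ n ∈ Icc 1 N, ((if IsSquare n then 1 / (n : ℝ) * (Y / selbergSum D + (D : ℝ) ^ 5) else 0)
          + 4 * (D : ℝ) ^ 5) :=
        sum_le_sum fun n hn => one_div_mul_sum_selbergMajorant_mul_oddJacobi_le hD Y
          (Nat.one_le_iff_ne_zero.mp (mem_Icc.mp hn).1)
    _ = (∑ n ∈ Icc 1 N with IsSquare n, 1 / (n : ℝ)) * (Y / selbergSum D + (D : ℝ) ^ 5)
          + 4 * N * (D : ℝ) ^ 5 := by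
        rw [sum_add_distrib, ← sum_filter, ← sum_mul, sum_const, Nat.card_Icc, nsmul_eq_mul,
          Nat.add_sub_cancel]
        ring
    _ ≤ _ := by
        gcongr
        exact sum_one_div_isSquare_le N

theorem sum_selbergMajorant_mul_truncatedL_add_le (hD : 1 ≤ D) (N Y : ℕ) :
    ∑ m ∈ Icc 1 Y with Odd m, selbergMajorant D m * (truncatedL N m + tailBound Y N)
      ≤ (2 + tailBound Y N) * (Y / selbergSum D + (D : ℝ) ^ 5) + 4 * N * (D : ℝ) ^ 5 := by
  have hodd : ∑ m ∈ Icc 1 Y with Odd m, selbergMajorant D m ≤ Y / selbergSum D + (D : ℝ) ^ 5 :=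
    (sum_le_sum_of_subset_of_nonneg (filter_subset _ _) fun m _ _ =>
      selbergMajorant_nonneg D m).trans (sum_selbergMajorant_le hD Y)
  have htail := mul_le_mul_of_nonneg_right hodd (tailBound_nonneg Y N)
  simp only [mul_add, sum_add_distrib, ← sum_mul]
  linarith [sum_selbergMajorant_mul_truncatedL_le hD N Y]

theorem odd_of_squarefree_two_mul (h : Squarefree (2 * m)) : Odd m :=
  Nat.coprime_two_left.mp (Nat.coprime_of_squarefree_mul h)

theorem moebius_sq_div_card_divisors_mul_sum_eq (Y : ℕ) (L : ℕ → ℝ) :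
    ∑ m ∈ Icc 2 Y,
        ((ArithmeticFunction.moebius (2 * m) : ℝ) ^ 2 / ((Nat.divisors m).card : ℝ)) * L m
      = ∑ m ∈ Icc 2 Y with Squarefree (2 * m), 1 / ((Nat.divisors m).card : ℝ) * L m := by
  rw [sum_filter]
  refine sum_congr rfl fun m _ => ?_
  split_ifs with h
  · have hmu : (ArithmeticFunction.moebius (2 * m) : ℝ) ^ 2 = 1 := by
      exact_mod_cast ArithmeticFunction.moebius_sq_eq_one_of_squarefree h
    rw [hmu]
  · simp [ArithmeticFunction.moebius_eq_zero_of_not_squarefree h]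

/-- Positivity of the truncated series allows `1 / τ` to be replaced by its majorant and the
nonsquarefree odd moduli to be added. -/
theorem sum_moebius_sq_div_card_divisors_mul_le (hD : 1 ≤ D) (N Y : ℕ)
    (hL : ∀ m : ℕ, 1 < m → Odd m → Squarefree m →
      Filter.Tendsto (truncatedL · m) Filter.atTop (nhds (L m))) :
    ∑ m ∈ Icc 2 Y,
        ((ArithmeticFunction.moebius (2 * m) : ℝ) ^ 2 / ((Nat.divisors m).card : ℝ)) * L m
      ≤ ∑ m ∈ Icc 1 Y with Odd m, selbergMajorant D m * (truncatedL N m + tailBound Y N) := by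
  have hpos {m : ℕ} (hm : m ≤ Y) (hodd : Odd m) : 0 ≤ truncatedL N m + tailBound Y N :=
    truncatedL_add_tailBound_nonneg hodd hm N
  rw [moebius_sq_div_card_divisors_mul_sum_eq]
  calc _ ≤ ∑ m ∈ Icc 2 Y with Squarefree (2 * m),
          selbergMajorant D m * (truncatedL N m + tailBound Y N) := by
        refine sum_le_sum fun m hm => ?_
        obtain ⟨hmem, hsq⟩ := mem_filter.mp hm
        obtain ⟨hm2, hmY⟩ := mem_Icc.mp hmem
        have hodd := odd_of_squarefree_two_mul hsq
        have hsf : Squarefree m := hsq.squarefree_of_dvd (Nat.dvd_mul_left m 2)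
        have hLle := le_truncatedL_add_tailBound hodd
          (not_isSquare_of_squarefree (Nat.ne_of_gt hm2) hsf) hmY (hL m hm2 hodd hsf) N
        exact (mul_le_mul_of_nonneg_left hLle (by positivity)).trans <|
          mul_le_mul_of_nonneg_right (one_div_card_divisors_le_selbergMajorant hD (by lia))
            (hpos hmY hodd)
    _ ≤ _ := by
        refine sum_le_sum_of_subset_of_nonneg (fun m hm => ?_) fun m hm _ => ?_
        · obtain ⟨hmem, hsq⟩ := mem_filter.mp hm
          exact mem_filter.mpr ⟨Icc_subset_Icc_left one_le_two hmem, odd_of_squarefree_two_mul hsq⟩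
        · obtain ⟨hmem, hodd⟩ := mem_filter.mp hm
          exact mul_nonneg (selbergMajorant_nonneg D m) (hpos (mem_Icc.mp hmem).2 hodd)

end SiftedSum

/-! ### Choice of parameters -/

section Parameters

variable {u : ℝ} {Y : ℕ}

theorem sqrt_log_pow_forty_le (hu : 1 ≤ u) : √(Real.log (u ^ 40)) ≤ 2 * u ^ 5 := by
  have hlog : Real.log (u ^ 10) ≤ u ^ 10 - 1 := Real.log_le_sub_one_of_pos (by positivity)
  rw [Real.log_pow] at hlog ⊢
  refine Real.sqrt_le_iff.mpr ⟨by positivity, ?_⟩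
  push_cast at hlog ⊢
  linarith

theorem sqrt_log_pow_forty_le_selbergSum (hu : 1 ≤ u) :
    √(Real.log (u ^ 40)) ≤ 9 * selbergSum ⌊u⌋₊ := by
  have hV := selbergSum_pos (Nat.floor_pos.mpr hu)
  have hlog : Real.log u ≤ Real.log (⌊u⌋₊ + 1) :=
    Real.log_le_log (by linarith) (Nat.lt_floor_add_one u).le
  rw [Real.log_pow]
  refine Real.sqrt_le_iff.mpr ⟨by positivity, ?_⟩
  push_cast
  linarith [log_add_one_le_two_mul_selbergSum_sq ⌊u⌋₊, sq_nonneg (selbergSum ⌊u⌋₊)]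

theorem tailBound_le_ten (hu : 1 ≤ u) (hY : 1 ≤ Y) (hYu : Y ≤ u ^ 40) :
    tailBound Y ⌈u ^ 30⌉₊ ≤ 10 := by
  have hsqrt : √(Y : ℝ) ≤ u ^ 20 := Real.sqrt_le_iff.mpr ⟨by positivity, by rwa [← pow_mul]⟩
  have hlog : 1 + Real.log Y ≤ 5 * u ^ 10 := by
    have hYlog : Real.log Y ≤ 4 * Real.log (u ^ 10) := by
      convert Real.log_le_log (Nat.cast_pos.mpr hY) hYu using 1
      simp only [Real.log_pow]
      push_cast
      ring
    have hu10 : Real.log (u ^ 10) ≤ u ^ 10 - 1 := Real.log_le_sub_one_of_pos (by positivity)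
    linarith [one_le_pow₀ (n := 10) hu]
  rw [tailBound, div_le_iff₀ (by positivity)]
  calc 2 * (√(Y : ℝ) * (1 + Real.log Y)) ≤ 2 * (u ^ 20 * (5 * u ^ 10)) := by gcongr
    _ = 10 * u ^ 30 := by ring
    _ ≤ 10 * (⌈u ^ 30⌉₊ + 1) := by linarith [Nat.le_ceil (u ^ 30)]

theorem sieve_bound_le (hu : 1 < u) (hYu : Y ≤ u ^ 40) :
    (2 + 10) * (Y / selbergSum ⌊u⌋₊ + (⌊u⌋₊ : ℝ) ^ 5) + 4 * ⌈u ^ 30⌉₊ * (⌊u⌋₊ : ℝ) ^ 5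
      ≤ 200 * u ^ 40 / √(Real.log (u ^ 40)) := by
  have hV := selbergSum_pos (Nat.floor_pos.mpr hu.le)
  have hl : 0 < √(Real.log (u ^ 40)) :=
    Real.sqrt_pos.mpr (Real.log_pos (one_lt_pow₀ hu (by norm_num)))
  set R := u ^ 40 / √(Real.log (u ^ 40)) with hR
  have hmain : Y / selbergSum ⌊u⌋₊ ≤ 9 * R := by
    rw [hR, ← mul_div_assoc, div_le_div_iff₀ hV hl, mul_right_comm,
      mul_comm (Y : ℝ)]
    gcongr
    exact sqrt_log_pow_forty_le_selbergSum hu.le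
  have hsmall : u ^ 35 ≤ 2 * R := by
    rw [hR, ← mul_div_assoc, le_div_iff₀ hl]
    calc u ^ 35 * √(Real.log (u ^ 40)) ≤ u ^ 35 * (2 * u ^ 5) := by
          gcongr
          exact sqrt_log_pow_forty_le hu.le
      _ = 2 * u ^ 40 := by ring
  have hD : (⌊u⌋₊ : ℝ) ^ 5 ≤ u ^ 5 := by
    gcongr
    exact Nat.floor_le (by linarith)
  have hN : (⌈u ^ 30⌉₊ : ℝ) ≤ 2 * u ^ 30 := by
    linarith [Nat.ceil_lt_add_one (by positivity : 0 ≤ u ^ 30), one_le_pow₀ (n := 30) hu.le]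
  have hND : ⌈u ^ 30⌉₊ * (⌊u⌋₊ : ℝ) ^ 5 ≤ 2 * u ^ 35 := by
    calc ⌈u ^ 30⌉₊ * (⌊u⌋₊ : ℝ) ^ 5 ≤ 2 * u ^ 30 * u ^ 5 := by gcongr
      _ = 2 * u ^ 35 := by ring
  have hu5 : u ^ 5 ≤ u ^ 35 := pow_le_pow_right₀ hu.le (by norm_num)
  have hR0 : 0 ≤ R := by positivity
  rw [mul_div_assoc, ← hR]
  linarith

end Parameters

theorem statement2 :
    ∃ C : ℝ, ∀ X : ℝ, 3 ≤ X → ∀ L : ℕ → ℝ,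
      (∀ m : ℕ, 1 < m → Odd m → Squarefree m →
        Filter.Tendsto (fun N : ℕ => ∑ n ∈ Finset.Icc 1 N, (jacobiSym (n : ℤ) m : ℝ) / n)
          Filter.atTop (nhds (L m))) →
      ∑ m ∈ Finset.Icc 2 ⌊X⌋₊,
          ((ArithmeticFunction.moebius (2 * m) : ℝ) ^ 2 / ((Nat.divisors m).card : ℝ)) * L m
        ≤ C * X / Real.sqrt (Real.log X) := by
  refine ⟨200, fun X hX L hL => ?_⟩
  obtain ⟨u, hu, rfl⟩ : ∃ u : ℝ, 1 < u ∧ u ^ 40 = X :=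
    ⟨X ^ ((40 : ℕ) : ℝ)⁻¹, Real.one_lt_rpow (by linarith) (by norm_num),
      Real.rpow_inv_natCast_pow (by linarith) (by norm_num)⟩
  have hD : 1 ≤ ⌊u⌋₊ := Nat.floor_pos.mpr hu.le
  have hY : 1 ≤ ⌊u ^ 40⌋₊ := Nat.floor_pos.mpr (by linarith)
  have hYu : (⌊u ^ 40⌋₊ : ℝ) ≤ u ^ 40 := Nat.floor_le (by linarith)
  have hV := selbergSum_pos hD
  calc _ ≤ _ := sum_moebius_sq_div_card_divisors_mul_le hD ⌈u ^ 30⌉₊ ⌊u ^ 40⌋₊ hL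
    _ ≤ _ := sum_selbergMajorant_mul_truncatedL_add_le hD _ _
    _ ≤ (2 + 10) * (⌊u ^ 40⌋₊ / selbergSum ⌊u⌋₊ + (⌊u⌋₊ : ℝ) ^ 5)
          + 4 * ⌈u ^ 30⌉₊ * (⌊u⌋₊ : ℝ) ^ 5 := by
      gcongr
      exact tailBound_le_ten hu.le hY hYu
    _ ≤ _ := sieve_bound_le hu hYu
end

section
/- Let z > 0 and let P(z) be the product of all odd primes ≤ z. Let (λ⁺_d) be any real sequence satisfying ∑_{d | n} λ⁺_d ≥ 1 if n = 1 and ∑_{d | n} λ⁺_d ≥ 0 for all n > 1. Let f : ℕ → [0,1] be a multiplicative function with f(p^m) ≤ f(p) for all primes p and all m ≥ 1, and define the multiplicative function f̂ by f̂(n) = ∏_{p | n} (1 − f(p)). Then for every positive integer n one has f(n) ≤ ∑_{d | n, d | P(z)} λ⁺_d f̂(d). -/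
/-!
Let `S` be the set of primes dividing `m = gcd(n, P)`, and keep each `p ∈ S` independently with
probability `1 - f p`. For `d ∣ m` the number `∏_{p ∣ d} (1 - f p)` is the probability that every
prime factor of `d` is kept, i.e. that `d` divides the part of `m` made up of the kept primes.
Hence the right-hand side is the expectation of `∑ λ_d` over the divisors `d` of that random part:
the sieve condition makes it nonnegative, and at least `1` in the event, of probability
`∏_{p ∈ S} f p`, that no prime is kept. Finally `f n ≤ ∏_{p ∣ n} f p ≤ ∏_{p ∈ S} f p`.
-/

open Finset

/-- The `W`-part of `n`: the largest divisor of `n` all of whose prime factors lie in `W`, for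
`n ≠ 0`. The set `W` may contain non-primes, which do not contribute. -/
def primePart (W : Finset ℕ) (n : ℕ) : ℕ :=
  (n.factorization.filter (· ∈ W)).prod (· ^ ·)

lemma factorization_primePart (W : Finset ℕ) (n : ℕ) :
    (primePart W n).factorization = n.factorization.filter (· ∈ W) :=
  Nat.prod_pow_factorization_eq_self fun _ hp =>
    Nat.prime_of_mem_primeFactors (Finset.filter_subset _ _ hp)

lemma primePart_ne_zero (W : Finset ℕ) (n : ℕ) : primePart W n ≠ 0 :=
  Finsupp.prod_ne_zero_iff.2 fun _ hp =>
    pow_ne_zero _ (Nat.prime_of_mem_primeFactors (Finset.filter_subset _ _ hp)).ne_zero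

@[simp]
lemma primePart_empty (n : ℕ) : primePart ∅ n = 1 := by
  have hfilter : n.factorization.filter (· ∈ (∅ : Finset ℕ)) = 0 :=
    (Finsupp.filter_eq_zero_iff _ _).2 fun _ hp => absurd hp (notMem_empty _)
  rw [primePart, hfilter, Finsupp.prod_zero_index]

lemma dvd_primePart_iff {W : Finset ℕ} {d n : ℕ} (hn : n ≠ 0) :
    d ∣ primePart W n ↔ d ∣ n ∧ d.primeFactors ⊆ W := by
  rcases eq_or_ne d 0 with rfl | hd
  · simp [hn, primePart_ne_zero]
  rw [← Nat.factorization_le_iff_dvd hd (primePart_ne_zero W n),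
    ← Nat.factorization_le_iff_dvd hd hn, factorization_primePart, ← Nat.support_factorization]
  simp only [Finsupp.le_def, Finsupp.filter_apply, Finset.subset_iff, Finsupp.mem_support_iff,
    ← forall_and]
  refine forall_congr' fun p => ?_
  split_ifs <;> grind

lemma divisors_primePart (W : Finset ℕ) {n : ℕ} (hn : n ≠ 0) :
    (primePart W n).divisors = n.divisors.filter (·.primeFactors ⊆ W) := by
  ext d
  simp [dvd_primePart_iff hn, primePart_ne_zero, hn]

lemma divisors_gcd {m n : ℕ} (hm : m ≠ 0) :
    (m.gcd n).divisors = m.divisors.filter (· ∣ n) := by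
  ext d
  simp [Nat.dvd_gcd_iff, hm]

lemma apply_le_prod_primeFactors {R : Type*} [CommMonoidWithZero R] [PartialOrder R]
    [ZeroLEOneClass R] [PosMulMono R] {f : ℕ → R} (hf0 : ∀ n, 0 ≤ f n) (hf1 : f 1 = 1)
    (hfmult : ∀ m n : ℕ, Nat.Coprime m n → f (m * n) = f m * f n)
    (hfp : ∀ p m : ℕ, p.Prime → 1 ≤ m → f (p ^ m) ≤ f p) {n : ℕ} (hn : n ≠ 0) :
    f n ≤ ∏ p ∈ n.primeFactors, f p := by
  rw [Nat.multiplicative_factorization f hfmult hf1 hn, Nat.prod_factorization_eq_prod_primeFactors]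
  refine prod_le_prod (fun p _ => hf0 _) fun p hp => ?_
  have hprime := Nat.prime_of_mem_primeFactors hp
  exact hfp p _ hprime (hprime.factorization_pos_of_dvd hn (Nat.dvd_of_mem_primeFactors hp))

section Weights

variable {ι κ R : Type*} [DecidableEq ι] [CommRing R]

lemma sum_powerset_superset_prod_one_sub_mul_prod_sdiff (f : ι → R) {S T : Finset ι} (hT : T ⊆ S) :
    ∑ W ∈ S.powerset with T ⊆ W, (∏ i ∈ W, (1 - f i)) * ∏ i ∈ S \ W, f i =
      ∏ i ∈ T, (1 - f i) := by
  have hvanish (W : Finset ι) : ∏ i ∈ S \ W, (if i ∉ T then f i else 0) =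
      if T ⊆ W then ∏ i ∈ S \ W, f i else 0 := by
    rw [prod_ite_zero]
    congr 1
    grind
  calc ∑ W ∈ S.powerset with T ⊆ W, (∏ i ∈ W, (1 - f i)) * ∏ i ∈ S \ W, f i
      = ∑ W ∈ S.powerset, (∏ i ∈ W, (1 - f i)) * ∏ i ∈ S \ W, (if i ∉ T then f i else 0) := by
        simp only [sum_filter, hvanish, mul_ite, mul_zero]
    _ = ∏ i ∈ S, (if i ∈ T then 1 - f i else 1) := by
        rw [← prod_add]
        exact prod_congr rfl fun i _ => by split_ifs <;> simp_all
    _ = ∏ i ∈ T, (1 - f i) := by rw [prod_ite_mem, inter_eq_right.2 hT]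

lemma sum_mul_prod_one_sub (f : ι → R) (a : κ → R) {S : Finset ι} {D : Finset κ}
    {T : κ → Finset ι} (hT : ∀ d ∈ D, T d ⊆ S) :
    ∑ d ∈ D, a d * ∏ i ∈ T d, (1 - f i) =
      ∑ W ∈ S.powerset, ((∏ i ∈ W, (1 - f i)) * ∏ i ∈ S \ W, f i) * ∑ d ∈ D with T d ⊆ W, a d := by
  calc ∑ d ∈ D, a d * ∏ i ∈ T d, (1 - f i)
      = ∑ d ∈ D, ∑ W ∈ S.powerset with T d ⊆ W,
          ((∏ i ∈ W, (1 - f i)) * ∏ i ∈ S \ W, f i) * a d :=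
        sum_congr rfl fun d hd => by
          rw [← sum_powerset_superset_prod_one_sub_mul_prod_sdiff f (hT d hd), mul_comm, sum_mul]
    _ = ∑ W ∈ S.powerset, ∑ d ∈ D with T d ⊆ W,
          ((∏ i ∈ W, (1 - f i)) * ∏ i ∈ S \ W, f i) * a d :=
        sum_comm' (by simp only [mem_filter]; tauto)
    _ = _ := by simp only [mul_sum]

end Weights

section Sieve

variable {R : Type*} [CommRing R] [PartialOrder R] [IsOrderedRing R]

lemma prod_primeFactors_le_sum_divisors {lam f : ℕ → R}
    (hlam : ∀ n : ℕ, 0 < n → (if n = 1 then (1 : R) else 0) ≤ ∑ d ∈ n.divisors, lam d)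
    {m : ℕ} (hm : m ≠ 0) (hf : ∀ p ∈ m.primeFactors, 0 ≤ f p ∧ f p ≤ 1) :
    ∏ p ∈ m.primeFactors, f p ≤
      ∑ d ∈ m.divisors, lam d * ∏ p ∈ d.primeFactors, (1 - f p) := by
  have hsieve (W : Finset ℕ) : 0 ≤ ∑ d ∈ (primePart W m).divisors, lam d :=
    le_trans (by split_ifs <;> simp) (hlam _ (primePart_ne_zero W m).pos)
  have hone : 1 ≤ ∑ d ∈ (primePart ∅ m).divisors, lam d := by
    simpa using hlam 1 one_pos
  have hweight : ∀ W ∈ m.primeFactors.powerset,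
      0 ≤ (∏ p ∈ W, (1 - f p)) * ∏ p ∈ m.primeFactors \ W, f p := fun W hW =>
    mul_nonneg (prod_nonneg fun p hp => sub_nonneg.2 (hf p (mem_powerset.1 hW hp)).2)
      (prod_nonneg fun p hp => (hf p (mem_sdiff.1 hp).1).1)
  have hprimes : ∀ d ∈ m.divisors, d.primeFactors ⊆ m.primeFactors := fun d hd =>
    Nat.primeFactors_mono (Nat.dvd_of_mem_divisors hd) hm
  rw [sum_mul_prod_one_sub f lam hprimes]
  simp only [← divisors_primePart _ hm]
  calc ∏ p ∈ m.primeFactors, f p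
      ≤ ((∏ p ∈ ∅, (1 - f p)) * ∏ p ∈ m.primeFactors \ ∅, f p) *
          ∑ d ∈ (primePart ∅ m).divisors, lam d := by
        rw [prod_empty, one_mul, sdiff_empty]
        exact le_mul_of_one_le_right (prod_nonneg fun p hp => (hf p hp).1) hone
    _ ≤ _ := single_le_sum (fun W hW => mul_nonneg (hweight W hW) (hsieve W))
        (empty_mem_powerset _)

theorem statement4_general (P : ℕ) {lam f : ℕ → R}
    (hlam : ∀ n : ℕ, 0 < n → (if n = 1 then (1 : R) else 0) ≤ ∑ d ∈ n.divisors, lam d)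
    (hf01 : ∀ n, 0 ≤ f n ∧ f n ≤ 1) (hf1 : f 1 = 1)
    (hfmult : ∀ m n : ℕ, Nat.Coprime m n → f (m * n) = f m * f n)
    (hfp : ∀ p m : ℕ, p.Prime → 1 ≤ m → f (p ^ m) ≤ f p) {n : ℕ} (hn : 0 < n) :
    f n ≤ ∑ d ∈ n.divisors.filter (· ∣ P), lam d * ∏ p ∈ d.primeFactors, (1 - f p) := by
  rw [← divisors_gcd hn.ne']
  calc f n ≤ ∏ p ∈ n.primeFactors, f p :=
        apply_le_prod_primeFactors (fun m => (hf01 m).1) hf1 hfmult hfp hn.ne'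
    _ ≤ ∏ p ∈ (n.gcd P).primeFactors, f p :=
        prod_le_prod_of_subset_of_le_one (Nat.primeFactors_mono (Nat.gcd_dvd_left n P) hn.ne')
          (fun p _ => (hf01 p).1) fun p _ _ => (hf01 p).2
    _ ≤ ∑ d ∈ (n.gcd P).divisors, lam d * ∏ p ∈ d.primeFactors, (1 - f p) :=
        prod_primeFactors_le_sum_divisors hlam (Nat.gcd_pos_of_pos_left P hn).ne' fun p _ => hf01 p

end Sieve

theorem statement4 (z : ℝ) (hz : 0 < z)
    (P : ℕ) (hP : P = ∏ p ∈ (Finset.Icc 1 ⌊z⌋₊).filter (fun p : ℕ => p.Prime ∧ Odd p), p)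
    (lam : ℕ → ℝ)
    (hlam : ∀ n : ℕ, 0 < n → (if n = 1 then (1 : ℝ) else 0) ≤ ∑ d ∈ Nat.divisors n, lam d)
    (f : ℕ → ℝ)
    (hf01 : ∀ n, 0 ≤ f n ∧ f n ≤ 1)
    (hf1 : f 1 = 1)
    (hfmult : ∀ m n : ℕ, Nat.Coprime m n → f (m * n) = f m * f n)
    (hfp : ∀ p m : ℕ, p.Prime → 1 ≤ m → f (p ^ m) ≤ f p)
    (fhat : ℕ → ℝ) (hfhat : ∀ n : ℕ, fhat n = ∏ p ∈ n.primeFactors, (1 - f p)) :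
    ∀ n : ℕ, 0 < n →
      f n ≤ ∑ d ∈ n.divisors.filter (· ∣ P), lam d * fhat d := by
  intro n hn
  simpa only [hfhat] using statement4_general P hlam hf01 hf1 hfmult hfp hn
end
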